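/- arXiv:1909.10898 — 9 statements merged into one kernel-verified Lean document; each statement's English description precedes it below -/
import Mathlib

section
/- Let X be a finite subset of D^k and let X̄ = {(x_1,…,x_k) ∈ X : x_i ≠ x_j for all 1 ≤ i ≠ j ≤ k}. Then |X̄| = Σ_{τ ∈ S_k} sign(τ)·|X_τ|, where sign(τ) = (−1)^{k−c(τ)} is the signature of τ and c(τ) is the number of disjoint cycles of τ (fixed points counted as cycles of length 1). -/
/-- Number of disjoint cycles of a permutation of `Fin k`,
with fixed points counted as cycles of length 1. -/
def cycleCount {k : ℕ} (τ : Equiv.Perm (Fin k)) : ℕ :=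
  τ.cycleType.card + (k - τ.support.card)

/-!
A tuple `x` contributes to the right-hand side the signed count of the permutations `τ` with
`x ∘ τ = x`. This count is the Leibniz expansion of the determinant of the matrix with entries
`[x i = x j]`, which is the identity matrix when `x` is injective and has two equal rows otherwise.
-/

open Equiv.Perm Finset

theorem card_cycleType_le_card_support {α : Type*} [Fintype α] [DecidableEq α]
    (τ : Equiv.Perm α) : τ.cycleType.card ≤ #τ.support := by
  simpa [sum_cycleType] using
    Multiset.card_nsmul_le_sum (s := τ.cycleType) fun _ hn => (one_lt_of_mem_cycleType hn).le

theorem sub_cycleCount {k : ℕ} (τ : Equiv.Perm (Fin k)) :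
    k - cycleCount τ = #τ.support - τ.cycleType.card := by
  have hsupp : #τ.support ≤ k := card_finset_fin_le _
  unfold cycleCount
  omega

theorem neg_one_pow_sub_cycleCount {k : ℕ} (τ : Equiv.Perm (Fin k)) :
    (-1 : ℤˣ) ^ (k - cycleCount τ) = sign τ := by
  have hle := card_cycleType_le_card_support τ
  rw [sign_of_cycleType, sum_cycleType, sub_cycleCount]
  exact neg_one_pow_congr (by rw [Nat.even_sub hle, Nat.even_add])

section Determinant

variable {ι D R : Type*} [Fintype ι] [DecidableEq ι] [DecidableEq D] [CommRing R]

theorem det_one_submatrix_self (x : ι → D) :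
    ((1 : Matrix D D R).submatrix x x).det = if Function.Injective x then 1 else 0 := by
  split_ifs with hx
  · rw [Matrix.submatrix_one x hx, Matrix.det_one]
  · obtain ⟨i, j, hij, hne⟩ := Function.not_injective_iff.mp hx
    refine Matrix.det_zero_of_row_eq hne ?_
    ext l
    rw [Matrix.submatrix_apply, Matrix.submatrix_apply, hij]

theorem det_one_submatrix_self_eq_sum_sign (x : ι → D) :
    ((1 : Matrix D D R).submatrix x x).det =
      ∑ τ ∈ {τ : Equiv.Perm ι | x ∘ τ = x}, ((sign τ : ℤ) : R) := by
  simp only [Matrix.det_apply', Matrix.submatrix_apply, Matrix.one_apply, Fintype.prod_boole,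
    mul_boole, sum_filter, funext_iff, Function.comp_apply]

theorem sum_sign_comp_eq_self (x : ι → D) :
    ∑ τ ∈ {τ : Equiv.Perm ι | x ∘ τ = x}, (sign τ : ℤ) = if Function.Injective x then 1 else 0 := by
  simpa only [Int.cast_id] using
    (det_one_submatrix_self_eq_sum_sign (R := ℤ) x).symm.trans (det_one_submatrix_self x)

end Determinant

theorem li_wan_sieve_general {ι D M : Type*} [Fintype ι] [DecidableEq ι] [DecidableEq D]
    [AddCommGroup M] (X : Finset (ι → D)) (f : (ι → D) → M) :
    ∑ x ∈ X with Function.Injective x, f x =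
      ∑ τ : Equiv.Perm ι, (sign τ : ℤ) • ∑ x ∈ X with x ∘ τ = x, f x :=
  calc ∑ x ∈ X with Function.Injective x, f x
    _ = ∑ x ∈ X, (∑ τ ∈ {τ : Equiv.Perm ι | x ∘ τ = x}, (sign τ : ℤ)) • f x := by
        rw [sum_filter]
        simp only [sum_sign_comp_eq_self, ite_smul, one_smul, zero_smul]
    _ = ∑ x ∈ X, ∑ τ ∈ {τ : Equiv.Perm ι | x ∘ τ = x}, (sign τ : ℤ) • f x := by
        simp only [sum_smul]
    _ = ∑ τ : Equiv.Perm ι, ∑ x ∈ X with x ∘ τ = x, (sign τ : ℤ) • f x :=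
        sum_comm' fun _ _ => by simp only [mem_filter, mem_univ, true_and, and_comm]
    _ = ∑ τ : Equiv.Perm ι, (sign τ : ℤ) • ∑ x ∈ X with x ∘ τ = x, f x := by
        simp only [smul_sum]

/-- **Li–Wan sieve.**  For a finite set `X ⊆ D^k`, the number of tuples in `X` with
pairwise distinct coordinates equals `Σ_{τ ∈ S_k} sign(τ)·|X_τ|`, where
`sign(τ) = (-1)^{k - c(τ)}` and `X_τ` is the set of tuples in `X` fixed by `τ`. -/
theorem li_wan_sieve {D : Type*} [DecidableEq D] (k : ℕ) (hk : 0 < k)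
    (X : Finset (Fin k → D)) :
    ((X.filter fun x => Function.Injective x).card : ℤ) =
      ∑ τ : Equiv.Perm (Fin k),
        (-1 : ℤ) ^ (k - cycleCount τ) * ((X.filter fun x => x ∘ τ = x).card : ℤ) := by
  simpa [← neg_one_pow_sub_cycleCount] using li_wan_sieve_general X fun _ => (1 : ℤ)
end

section
/- Let X be a finite symmetric subset of D^k and let j be a positive integer. Then k!·|M_j(X)| = Σ_{τ ∈ S_k} w_j(τ)·|X_τ|. -/
/-- The multiset `[x_1, …, x_k]` associated to a tuple `(x_1, …, x_k)`. -/
def msetOf {D : Type*} {k : ℕ} (x : Fin k → D) : Multiset D :=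
  (List.ofFn x : Multiset D)

/-- The cycle lengths of a permutation of `Fin k`, with fixed points counted
as cycles of length 1. -/
def fullCycleType {k : ℕ} (τ : Equiv.Perm (Fin k)) : Multiset ℕ :=
  τ.cycleType + Multiset.replicate (k - τ.support.card) 1

/-- The weight `w_j(τ) = ∏_i (1 - (j+1)·[(j+1) ∣ ℓ_i])` over the cycle lengths
`ℓ_i` of `τ`. -/
def wj {k : ℕ} (j : ℕ) (τ : Equiv.Perm (Fin k)) : ℤ :=
  ((fullCycleType τ).map fun ℓ =>
    1 - ((j : ℤ) + 1) * (if (j + 1) ∣ ℓ then 1 else 0)).prod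

/-- `M(X)`: the set of `k`-multisets `[x_1,…,x_k]` for `(x_1,…,x_k) ∈ X`. -/
def MX {D : Type*} [DecidableEq D] {k : ℕ} (X : Finset (Fin k → D)) : Finset (Multiset D) :=
  X.image msetOf

/-- `M_j(X)`: multisets in `M(X)` in which every element has multiplicity at most `j`. -/
def Mj {D : Type*} [DecidableEq D] {k : ℕ} (j : ℕ) (X : Finset (Fin k → D)) :
    Finset (Multiset D) :=
  (MX X).filter fun m => ∀ a ∈ m, m.count a ≤ j

/-! The factor `1 - (j + 1) [(j + 1) ∣ ℓ]` is minus the `ℓ`-th power sum of the `j` nontrivial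
`(j + 1)`-st roots of unity. Expanding the product over the cycles of `τ`, the weight `w_j(τ)` is,
up to `(-1) ^ k`, the sign of `τ` times a weighted count of the colourings of the positions by those
`j` roots that are constant on the cycles of `τ`.

Exchanging sums, the right-hand side becomes the sum over `x ∈ X` of the total weight of the
stabilizer of `x`. If a value occurs more than `j` times in `x`, then in every colouring two of its
positions get the same colour, and the transposition of these positions cancels the signs, so the
total weight is `0`. Otherwise every cycle of a stabilizing `τ` has length at most `j`, so all
weights are `1` and the total is the order of the stabilizer; the orbit-stabilizer theorem then
gives `k!` for each multiset.
-/

open Finset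

section CycleClasses

theorem comp_perm_eq_self_iff {ι κ : Type*} [Finite ι] {τ : Equiv.Perm ι} {f : ι → κ} :
    f ∘ τ = f ↔ ∀ i i', τ.SameCycle i i' → f i = f i' := by
  refine ⟨fun hf i i' h => ?_, fun hf => funext fun i => (hf i (τ i) ?_).symm⟩
  · obtain ⟨n, rfl⟩ := h.exists_nat_pow_eq
    rw [Equiv.Perm.coe_pow]
    exact (congrFun (Function.iterate_invariant hf n) i).symm
  · exact (Equiv.Perm.SameCycle.refl τ i).apply_right

variable {ι : Type*} [Fintype ι] [DecidableEq ι]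

/-- The orbits of a permutation on the points it acts on, as a type; fixed points are singleton
classes. -/
abbrev CycleClass (τ : Equiv.Perm ι) : Type _ := Quotient (Equiv.Perm.SameCycle.setoid τ)

instance decidableRelSameCycleSetoid (τ : Equiv.Perm ι) :
    DecidableRel (α := ι) (Equiv.Perm.SameCycle.setoid τ) :=
  inferInstanceAs (DecidableRel τ.SameCycle)

/-- The points of a cycle class. -/
def classSupport {τ : Equiv.Perm ι} (q : CycleClass τ) : Finset ι :=
  {i | ⟦i⟧ = q}

theorem mem_classSupport {τ : Equiv.Perm ι} {q : CycleClass τ} {i : ι} :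
    i ∈ classSupport q ↔ τ.SameCycle q.out i := by
  rw [classSupport, mem_filter_univ, Quotient.mk_eq_iff_out]
  exact Equiv.Perm.sameCycle_comm

theorem classSupport_eq_support_cycleOf {τ : Equiv.Perm ι} {q : CycleClass τ}
    (hq : q.out ∈ τ.support) : classSupport q = (τ.cycleOf q.out).support := by
  ext i
  rw [mem_classSupport, Equiv.Perm.mem_support_cycleOf_iff' (Equiv.Perm.mem_support.1 hq)]

theorem classSupport_eq_singleton {τ : Equiv.Perm ι} {q : CycleClass τ}
    (hq : q.out ∉ τ.support) : classSupport q = {q.out} := by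
  ext i
  rw [mem_classSupport, mem_singleton]
  exact ⟨fun h => (h.eq_of_left (Equiv.Perm.notMem_support.1 hq)).symm,
    fun h => h ▸ Equiv.Perm.SameCycle.refl τ _⟩

theorem injOn_cycleOf_out (τ : Equiv.Perm ι) :
    Set.InjOn (fun q : CycleClass τ => τ.cycleOf q.out) {q | q.out ∈ τ.support} := by
  intro q hq r hr h
  have hqr : τ.SameCycle q.out r.out :=
    (Equiv.Perm.sameCycle_iff_cycleOf_eq_of_mem_support hq hr).2 h
  exact Quotient.out_equiv_out.1 hqr

theorem image_cycleOf_out (τ : Equiv.Perm ι) :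
    ({q | q.out ∈ τ.support} : Finset (CycleClass τ)).image (fun q => τ.cycleOf q.out) =
      τ.cycleFactorsFinset := by
  ext c
  rw [mem_image]
  constructor
  · rintro ⟨q, hq, rfl⟩
    exact Equiv.Perm.cycleOf_mem_cycleFactorsFinset_iff.2 ((mem_filter_univ q).1 hq)
  · intro hc
    obtain ⟨i, hi⟩ := (Equiv.Perm.mem_cycleFactorsFinset_iff.1 hc).1.nonempty_support
    have hout : τ.SameCycle (⟦i⟧ : CycleClass τ).out i :=
      Quotient.mk_out (s := Equiv.Perm.SameCycle.setoid τ) i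
    refine ⟨⟦i⟧, (mem_filter_univ _).2 ?_, ?_⟩
    · exact hout.mem_support_iff.2 (Equiv.Perm.mem_cycleFactorsFinset_support_le hc hi)
    · rw [hout.cycleOf_eq, Equiv.Perm.cycle_is_cycleOf hi hc]

theorem cycleType_eq_map_card_classSupport (τ : Equiv.Perm ι) :
    τ.cycleType = ({q | q.out ∈ τ.support} : Finset (CycleClass τ)).val.map
      fun q => #(classSupport q) := by
  have hinj : Set.InjOn (fun q : CycleClass τ => τ.cycleOf q.out)
      ({q | q.out ∈ τ.support} : Finset (CycleClass τ)) := by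
    simpa only [coe_filter_univ] using injOn_cycleOf_out τ
  rw [Equiv.Perm.cycleType_def, ← image_cycleOf_out, image_val_of_injOn hinj, Multiset.map_map]
  refine Multiset.map_congr rfl fun q hq => ?_
  rw [classSupport_eq_support_cycleOf ((mem_filter_univ q).1 hq)]
  rfl

theorem card_filter_out_notMem_support (τ : Equiv.Perm ι) :
    #{q : CycleClass τ | q.out ∉ τ.support} = Fintype.card ι - #τ.support := by
  have hmoved : ∑ q : CycleClass τ with q.out ∈ τ.support, #(classSupport q) = #τ.support := by
    rw [← Equiv.Perm.sum_cycleType, cycleType_eq_map_card_classSupport]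
    rfl
  have hfixed : ∑ q : CycleClass τ with q.out ∉ τ.support, #(classSupport q) =
      #{q : CycleClass τ | q.out ∉ τ.support} := by
    rw [card_eq_sum_ones]
    refine sum_congr rfl fun q hq => ?_
    rw [classSupport_eq_singleton ((mem_filter_univ q).1 hq), card_singleton]
  have hall : ∑ q : CycleClass τ, #(classSupport q) = Fintype.card ι :=
    (card_eq_sum_card_fiberwise fun _ _ => mem_univ _).symm
  rw [← hall, ← sum_filter_add_sum_filter_not univ (fun q : CycleClass τ => q.out ∈ τ.support),
    hmoved, hfixed, Nat.add_sub_cancel_left]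

theorem parts_partition_eq_map_card_classSupport (τ : Equiv.Perm ι) :
    τ.partition.parts = univ.val.map fun q : CycleClass τ => #(classSupport q) := by
  have hfixed : ({q | q.out ∉ τ.support} : Finset (CycleClass τ)).val.map
      (fun q => #(classSupport q)) = Multiset.replicate (Fintype.card ι - #τ.support) 1 := by
    rw [← card_filter_out_notMem_support, card_def, ← Multiset.map_const']
    refine Multiset.map_congr rfl fun q hq => ?_
    rw [classSupport_eq_singleton ((mem_filter_univ q).1 hq), card_singleton]
  rw [Equiv.Perm.parts_partition, cycleType_eq_map_card_classSupport, ← hfixed, ← Multiset.map_add,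
    filter_val, filter_val, Multiset.filter_add_not]

theorem sum_prod_comp_perm_eq_self {R κ : Type*} [CommSemiring R] [Fintype κ] [DecidableEq κ]
    (τ : Equiv.Perm ι) (u : κ → R) :
    ∑ f : ι → κ with f ∘ τ = f, ∏ i, u (f i) =
      (τ.partition.parts.map fun ℓ => ∑ c, u c ^ ℓ).prod := by
  have hprod (g : CycleClass τ → κ) :
      ∏ i : ι, u (g ⟦i⟧) = ∏ q, u (g q) ^ #(classSupport q) := by
    rw [prod_comp (fun q => u (g q)), image_univ_of_surjective Quotient.mk_surjective]
    rfl
  calc ∑ f : ι → κ with f ∘ τ = f, ∏ i, u (f i)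
      = ∑ g : CycleClass τ → κ, ∏ i, u (g ⟦i⟧) := by
        refine sum_bij' (fun f hf => Quotient.lift f (comp_perm_eq_self_iff.1 (mem_filter.1 hf).2))
          (fun g _ i => g ⟦i⟧) ?_ ?_ ?_ ?_ ?_
        · exact fun _ _ => mem_univ _
        · intro g _
          rw [mem_filter_univ, comp_perm_eq_self_iff]
          exact fun i i' h => congrArg g (Quotient.sound h)
        · exact fun _ _ => rfl
        · exact fun g _ => funext fun q => Quotient.inductionOn q fun _ => rfl
        · exact fun _ _ => rfl
    _ = ∏ q : CycleClass τ, ∑ c, u c ^ #(classSupport q) := by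
        simp only [hprod, prod_univ_sum, Fintype.piFinset_univ]
    _ = (τ.partition.parts.map fun ℓ => ∑ c, u c ^ ℓ).prod := by
        rw [parts_partition_eq_map_card_classSupport, Multiset.map_map]
        rfl

theorem exists_le_card_fiber_of_mem_parts_partition {D : Type*} [DecidableEq D]
    {τ : Equiv.Perm ι} {x : ι → D} (hx : x ∘ τ = x) {ℓ : ℕ} (hℓ : ℓ ∈ τ.partition.parts) :
    ∃ i, ℓ ≤ #{i' | x i' = x i} := by
  rw [parts_partition_eq_map_card_classSupport, Multiset.mem_map] at hℓ
  obtain ⟨q, -, rfl⟩ := hℓ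
  refine ⟨q.out, card_le_card fun i hi => (mem_filter_univ i).2 ?_⟩
  exact (comp_perm_eq_self_iff.1 hx _ i (mem_classSupport.1 hi)).symm

theorem sign_eq_neg_one_pow_card_add_card_parts (τ : Equiv.Perm ι) :
    Equiv.Perm.sign τ = (-1) ^ (Fintype.card ι + Multiset.card τ.partition.parts) := by
  have hle : #τ.support ≤ Fintype.card ι := card_le_univ _
  rw [Equiv.Perm.sign_of_cycleType, Equiv.Perm.sum_cycleType, Equiv.Perm.parts_partition,
    Multiset.card_add, Multiset.card_replicate, neg_one_pow_congr]
  grind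

theorem prod_map_neg_parts_partition {R : Type*} [CommRing R] (τ : Equiv.Perm ι) (F : ℕ → R) :
    (τ.partition.parts.map fun ℓ => -F ℓ).prod =
      (-1) ^ Fintype.card ι * (Equiv.Perm.sign τ : ℤ) * (τ.partition.parts.map F).prod := by
  have hneg := Multiset.prod_map_neg (τ.partition.parts.map F)
  rw [Multiset.map_map, Multiset.card_map] at hneg
  rw [sign_eq_neg_one_pow_card_add_card_parts]
  push_cast
  rw [← pow_add, ← add_assoc, pow_add, ← two_mul, pow_mul, neg_one_sq, one_pow, one_mul]
  exact hneg

end CycleClasses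

section Stabilizers

variable {ι : Type*} [Fintype ι] [DecidableEq ι] {D : Type*} [DecidableEq D]

/-- The stabilizer of the tuple `x` under the action `τ ∘ x = x ∘ τ`, as a finset so that it can
index sums. -/
def tupleStabilizer (x : ι → D) : Finset (Equiv.Perm ι) :=
  {τ | x ∘ τ = x}

theorem mem_tupleStabilizer {x : ι → D} {τ : Equiv.Perm ι} :
    τ ∈ tupleStabilizer x ↔ x ∘ τ = x :=
  mem_filter_univ τ

theorem sum_mul_card_comp_perm_eq_self {R : Type*} [Semiring R] (w : Equiv.Perm ι → R)
    (X : Finset (ι → D)) :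
    ∑ τ, w τ * (#{x ∈ X | x ∘ τ = x} : R) = ∑ x ∈ X, ∑ τ ∈ tupleStabilizer x, w τ := by
  simp only [tupleStabilizer, card_filter, Nat.cast_sum, Nat.cast_ite, Nat.cast_one, Nat.cast_zero,
    mul_sum, mul_ite, mul_one, mul_zero, sum_filter]
  exact sum_comm

theorem sum_sign_tupleStabilizer_eq_zero {x : ι → D} (hx : ¬ Function.Injective x) :
    ∑ τ ∈ tupleStabilizer x, (Equiv.Perm.sign τ : ℤ) = 0 := by
  obtain ⟨p, q, hpq, hne⟩ := Function.not_injective_iff.1 hx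
  have hswap : x ∘ Equiv.swap p q = x := by
    rw [Equiv.comp_swap_eq_update, hpq, Function.update_eq_self, ← hpq, Function.update_eq_self]
  refine sum_involution (fun τ _ => Equiv.swap p q * τ) ?_ ?_ ?_ ?_
  · intro τ _
    rw [Equiv.Perm.sign_mul, Equiv.Perm.sign_swap hne]
    simp
  · intro τ _ _ h
    exact hne (Equiv.swap_eq_one_iff.1 (mul_eq_right.1 h))
  · intro τ hτ
    rw [mem_tupleStabilizer] at hτ ⊢
    rw [Equiv.Perm.coe_mul, ← Function.comp_assoc, hswap, hτ]
  · intro τ _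
    exact Equiv.swap_mul_self_mul p q τ

theorem filter_tupleStabilizer {κ : Type*} [DecidableEq κ] (x : ι → D) (f : ι → κ) :
    (tupleStabilizer x).filter (fun τ : Equiv.Perm ι => f ∘ τ = f) =
      tupleStabilizer fun i => (x i, f i) := by
  ext τ
  simp only [mem_filter, mem_tupleStabilizer, funext_iff, Function.comp_apply, Prod.mk.injEq,
    forall_and]

theorem sum_sign_mul_prod_map_psum_tupleStabilizer_eq_zero {R κ : Type*} [CommRing R] [Fintype κ]
    (u : κ → R) {x : ι → D} {a : D} (ha : Fintype.card κ < #{i | x i = a}) :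
    ∑ τ ∈ tupleStabilizer x,
      (Equiv.Perm.sign τ : ℤ) * (τ.partition.parts.map fun ℓ => ∑ c, u c ^ ℓ).prod = 0 := by
  classical
  have hinj (f : ι → κ) : ¬ Function.Injective fun i => (x i, f i) := by
    obtain ⟨p, hp, q, hq, hne, hf⟩ :=
      exists_ne_map_eq_of_card_lt_of_maps_to (f := f) (t := univ) ha fun _ _ => mem_univ _
    rw [mem_filter_univ] at hp hq
    exact fun h => hne (h (Prod.ext (hp.trans hq.symm) hf))
  simp only [← sum_prod_comp_perm_eq_self, mul_sum, sum_filter, mul_ite, mul_zero]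
  rw [sum_comm]
  refine sum_eq_zero fun f _ => ?_
  rw [← sum_filter, filter_tupleStabilizer, ← sum_mul, ← Int.cast_sum,
    sum_sign_tupleStabilizer_eq_zero (hinj f), Int.cast_zero, zero_mul]

end Stabilizers

section RootsOfUnity

theorem sum_nonzero_stdAddChar_pow (n : ℕ) [NeZero n] (ℓ : ℕ) :
    ∑ c : {c : ZMod n // c ≠ 0}, ZMod.stdAddChar c.1 ^ ℓ =
      (if n ∣ ℓ then (n : ℂ) else 0) - 1 := by
  have hall : ∑ c : ZMod n, ZMod.stdAddChar c ^ ℓ = if n ∣ ℓ then (n : ℂ) else 0 := by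
    have h := AddChar.sum_mulShift (ℓ : ZMod n) (ZMod.isPrimitive_stdAddChar n)
    simp only [ZMod.natCast_eq_zero_iff, ZMod.card] at h
    simp only [← AddChar.map_nsmul_eq_pow, nsmul_eq_mul, mul_comm (ℓ : ZMod n), h]
    push_cast
    rfl
  have hsplit := Fintype.sum_eq_add_sum_subtype_ne (fun c : ZMod n => ZMod.stdAddChar c ^ ℓ) 0
  rw [hall, AddChar.map_zero_eq_one, one_pow] at hsplit
  exact eq_sub_of_add_eq' hsplit.symm

end RootsOfUnity

section Weights

variable {D : Type*} [DecidableEq D] {k : ℕ}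

theorem fullCycleType_eq_parts_partition (τ : Equiv.Perm (Fin k)) :
    fullCycleType τ = τ.partition.parts := by
  rw [fullCycleType, Equiv.Perm.parts_partition, Fintype.card_fin]

theorem intCast_wj (j : ℕ) (τ : Equiv.Perm (Fin k)) :
    (wj j τ : ℂ) = (-1) ^ k * ((Equiv.Perm.sign τ : ℤ) *
      (τ.partition.parts.map fun ℓ =>
        ∑ c : {c : ZMod (j + 1) // c ≠ 0}, ZMod.stdAddChar c.1 ^ ℓ).prod) := by
  have h := prod_map_neg_parts_partition τ
    fun ℓ => ∑ c : {c : ZMod (j + 1) // c ≠ 0}, ZMod.stdAddChar c.1 ^ ℓ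
  simp only [Fintype.card_fin, mul_assoc] at h
  rw [← h, wj, fullCycleType_eq_parts_partition, ← eq_intCast (Int.castRingHom ℂ),
    map_multiset_prod, Multiset.map_map]
  simp [sum_nonzero_stdAddChar_pow]

theorem wj_eq_one_of_card_fiber_le {j : ℕ} {x : Fin k → D} (hx : ∀ i, #{i' | x i' = x i} ≤ j)
    {τ : Equiv.Perm (Fin k)} (hτ : x ∘ τ = x) : wj j τ = 1 := by
  rw [wj, fullCycleType_eq_parts_partition]
  refine Multiset.prod_eq_one fun z hz => ?_
  obtain ⟨ℓ, hℓ, rfl⟩ := Multiset.mem_map.1 hz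
  obtain ⟨i, hi⟩ := exists_le_card_fiber_of_mem_parts_partition hτ hℓ
  have hndvd : ¬ (j + 1) ∣ ℓ :=
    Nat.not_dvd_of_pos_of_lt (τ.partition.parts_pos hℓ) (Nat.lt_succ_of_le (hi.trans (hx i)))
  rw [if_neg hndvd, mul_zero, sub_zero]

theorem sum_wj_tupleStabilizer_eq_zero {j : ℕ} {x : Fin k → D} {a : D} (ha : j < #{i | x i = a}) :
    ∑ τ ∈ tupleStabilizer x, wj j τ = 0 := by
  have hcard : Fintype.card {c : ZMod (j + 1) // c ≠ 0} = j := by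
    simp [Fintype.card_subtype_compl]
  rw [← Int.cast_eq_zero (α := ℂ), Int.cast_sum]
  simp only [intCast_wj]
  rw [← mul_sum, sum_sign_mul_prod_map_psum_tupleStabilizer_eq_zero _ (hcard.trans_lt ha), mul_zero]

theorem count_msetOf (x : Fin k → D) (a : D) : (msetOf x).count a = #{i | x i = a} := by
  rw [msetOf, ← Fin.univ_val_map, Multiset.count_map]
  simp only [eq_comm (a := a)]
  rfl

theorem sum_wj_tupleStabilizer (j : ℕ) (x : Fin k → D) :
    ∑ τ ∈ tupleStabilizer x, wj j τ =
      if ∀ a ∈ msetOf x, (msetOf x).count a ≤ j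
        then (#(tupleStabilizer x) : ℤ) else 0 := by
  simp only [count_msetOf]
  split_ifs with h
  · have hx (i : Fin k) : #{i' | x i' = x i} ≤ j := h _ (by simp [msetOf, List.mem_ofFn])
    rw [sum_congr rfl fun τ hτ => wj_eq_one_of_card_fiber_le hx (mem_tupleStabilizer.1 hτ)]
    simp
  · push Not at h
    obtain ⟨a, -, ha⟩ := h
    exact sum_wj_tupleStabilizer_eq_zero ha

end Weights

section Multisets

variable {D : Type*} {k : ℕ}

theorem msetOf_eq_iff {x y : Fin k → D} :
    msetOf x = msetOf y ↔ ∃ τ : Equiv.Perm (Fin k), x ∘ τ = y := by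
  have := Classical.decEq D
  refine ⟨fun h => ?_, ?_⟩
  · have hfiber (a : D) : Fintype.card {i // y i = a} = Fintype.card {i // x i = a} := by
      simp only [Fintype.card_subtype, ← count_msetOf, h]
    exact ⟨Equiv.ofFiberEquiv fun a => Fintype.equivOfCardEq (hfiber a),
      funext (Equiv.ofFiberEquiv_map _)⟩
  · rintro ⟨τ, rfl⟩
    exact (Multiset.coe_eq_coe.2 (Equiv.Perm.ofFn_comp_perm τ x)).symm

theorem comp_perm_mem_filter_msetOf {X : Finset (Fin k → D)}
    (hX : ∀ x ∈ X, ∀ τ : Equiv.Perm (Fin k), x ∘ τ ∈ X) (P : Multiset D → Prop)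
    [DecidablePred P] :
    ∀ x ∈ X.filter (fun x => P (msetOf x)), ∀ τ : Equiv.Perm (Fin k),
      x ∘ τ ∈ X.filter fun x => P (msetOf x) := by
  intro x hx τ
  rw [mem_filter] at hx ⊢
  rw [← msetOf_eq_iff.2 ⟨τ, rfl⟩]
  exact ⟨hX x hx.1 τ, hx.2⟩

variable [DecidableEq D]

theorem sum_card_tupleStabilizer_of_msetOf_eq {X : Finset (Fin k → D)}
    (hX : ∀ x ∈ X, ∀ τ : Equiv.Perm (Fin k), x ∘ τ ∈ X) {m : Multiset D} (hm : m ∈ MX X) :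
    ∑ x ∈ X with msetOf x = m, #(tupleStabilizer x) = k.factorial := by
  obtain ⟨x₀, hx₀, rfl⟩ := mem_image.1 hm
  have hmaps : ∀ τ : Equiv.Perm (Fin k), x₀ ∘ τ ∈ X.filter fun x => msetOf x = msetOf x₀ :=
    fun τ => mem_filter.2 ⟨hX x₀ hx₀ τ, (msetOf_eq_iff.2 ⟨τ, rfl⟩).symm⟩
  have hcoset {x : Fin k → D} (hx : msetOf x₀ = msetOf x) :
      #(tupleStabilizer x) = #{τ : Equiv.Perm (Fin k) | x₀ ∘ τ = x} := by
    obtain ⟨ρ, rfl⟩ := msetOf_eq_iff.1 hx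
    exact card_equiv (Equiv.mulLeft ρ) fun τ => by simp [mem_tupleStabilizer, Function.comp_assoc]
  rw [sum_congr rfl fun x hx => hcoset (mem_filter.1 hx).2.symm,
    ← card_eq_sum_card_fiberwise fun τ _ => hmaps τ, card_univ, Fintype.card_perm, Fintype.card_fin]

theorem factorial_mul_card_MX {X : Finset (Fin k → D)}
    (hX : ∀ x ∈ X, ∀ τ : Equiv.Perm (Fin k), x ∘ τ ∈ X) :
    k.factorial * #(MX X) = ∑ x ∈ X, #(tupleStabilizer x) := by
  rw [← sum_fiberwise_of_maps_to (t := MX X) fun x hx => mem_image_of_mem msetOf hx,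
    sum_congr rfl fun m hm => sum_card_tupleStabilizer_of_msetOf_eq hX hm, sum_const, smul_eq_mul,
    mul_comm]

theorem Mj_eq_MX_filter (j : ℕ) (X : Finset (Fin k → D)) :
    Mj j X = MX {x ∈ X | ∀ a ∈ msetOf x, (msetOf x).count a ≤ j} :=
  filter_image

end Multisets

/-- For a finite symmetric `X ⊆ D^k` and a positive integer `j`,
`k!·|M_j(X)| = Σ_{τ ∈ S_k} w_j(τ)·|X_τ|`. -/
theorem multiset_sieve_mult_le {D : Type*} [DecidableEq D] (k j : ℕ) (hk : 0 < k)
    (hj : 0 < j) (X : Finset (Fin k → D))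
    (hX : ∀ x ∈ X, ∀ τ : Equiv.Perm (Fin k), x ∘ τ ∈ X) :
    (Nat.factorial k : ℤ) * ((Mj j X).card : ℤ) =
      ∑ τ : Equiv.Perm (Fin k), wj j τ * ((X.filter fun x => x ∘ τ = x).card : ℤ) := by
  have hsymm := comp_perm_mem_filter_msetOf hX fun m => ∀ a ∈ m, m.count a ≤ j
  rw [sum_mul_card_comp_perm_eq_self, Mj_eq_MX_filter, ← Nat.cast_mul, factorial_mul_card_MX hsymm,
    Nat.cast_sum, sum_filter]
  exact sum_congr rfl fun x _ => (sum_wj_tupleStabilizer j x).symm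
end

section
/- Let X be a finite symmetric subset of D^k and let d be a positive integer with d ≤ k. Then k!·|M̄_d(X)| = Σ_{τ ∈ S_k} w̄_d(τ)·|X_τ|. -/
/-- The weight `w̄_d(τ)`: the coefficient of `x^d` in `∏_i (1 - (1-x)^{ℓ_i})`,
the product taken over the cycle lengths `ℓ_i` of `τ`. -/
noncomputable def wbar {k : ℕ} (d : ℕ) (τ : Equiv.Perm (Fin k)) : ℤ :=
  (((fullCycleType τ).map fun ℓ =>
    (1 - (1 - Polynomial.X) ^ ℓ : Polynomial ℤ)).prod).coeff d

/-- `M̄_d(X)`: multisets in `M(X)` with exactly `d` distinct elements. -/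
def Mbar {D : Type*} [DecidableEq D] {k : ℕ} (d : ℕ) (X : Finset (Fin k → D)) :
    Finset (Multiset D) :=
  (MX X).filter fun m => m.toFinset.card = d

/-!
The product `∏ (1 - u ^ l)` over the cycle lengths `l` of `τ` is the reversed characteristic
polynomial `det (1 - u P_τ)` of the permutation matrix of `τ`. Its sum over the stabilizer of a
tuple `x` factors over the fibres of `x`. Within one fibre `τ` runs over a full symmetric group, so
composing with a transposition cancels all principal minors of size at least two, and only the
constant and the linear term survive. Each fibre thus contributes a multiple of `1 - u`, and the
average over the stabilizer is `(1 - u) ^ m`, with `m` the number of distinct entries of `x`. At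
`u = 1 - X` this is the monomial `X ^ m`, whose coefficient at `d` singles out the tuples with
exactly `d` distinct entries, and counting orbits turns tuples into multisets.
-/

open Equiv Finset Polynomial

/-- The permutation that `τ` induces on the fibre of `f` over `i`, for `τ` preserving `f`. -/
def fiberPerm {α ι : Type*} (τ : Perm α) {f : α → ι} (hf : f ∘ τ = f) (i : ι) :
    Perm {a // f a = i} :=
  τ.subtypePerm fun a => by rw [← congr_fun hf a, Function.comp_apply]

theorem bijective_fiberPerm {α ι : Type*} (f : α → ι) :
    Function.Bijective fun τ : {τ : Perm α // f ∘ τ = f} => fiberPerm τ.1 τ.2 :=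
  ((subtypeEquiv DomMulAct.mk fun _ => Iff.rfl).trans
    (MulOpposite.opEquiv.trans (DomMulAct.stabilizerMulEquiv f).toEquiv)).bijective

section

variable {α D : Type*} [Fintype α] [DecidableEq α] [DecidableEq D]

/-- The finite set of permutations `τ` preserving `x` under `τ ↦ x ∘ τ`. -/
def compStabilizer (x : α → D) : Finset (Perm α) :=
  {τ | x ∘ ⇑τ = x}

theorem mem_compStabilizer {x : α → D} {τ : Perm α} : τ ∈ compStabilizer x ↔ x ∘ τ = x :=
  mem_filter_univ τ

end

theorem cycleOf_comp_self {α : Type*} (τ : Perm α) [DecidableRel τ.SameCycle] :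
    τ.cycleOf ∘ τ = τ.cycleOf :=
  funext τ.cycleOf_self_apply

theorem permMatrix_apply {α R : Type*} [DecidableEq α] [Zero R] [One R] (τ : Perm α) (a b : α) :
    τ.permMatrix R a b = if τ a = b then 1 else 0 := by
  simp [PEquiv.toMatrix_apply]

theorem permMatrix_mul_swap_submatrix {α R : Type*} [DecidableEq α] [Zero R] [One R] (τ : Perm α)
    {s : Finset α} (a b : s) :
    ((τ * swap (a : α) b).permMatrix R).submatrix (Subtype.val : s → α) (Subtype.val : s → α) =
      ((τ.permMatrix R).submatrix Subtype.val Subtype.val).submatrix (swap a b) id := by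
  ext i j
  simp only [Matrix.submatrix_apply, permMatrix_apply, Perm.mul_apply, id_eq,
    Subtype.val_injective.swap_apply]

theorem permMatrix_pow {α R : Type*} [Fintype α] [DecidableEq α] [Semiring R] (c : Perm α) (n : ℕ) :
    (c ^ n).permMatrix R = c.permMatrix R ^ n := by
  induction n with
  | zero => simp
  | succ n ih => rw [pow_succ', Matrix.permMatrix_mul, ih, pow_succ]

section

variable {α R : Type*} [Fintype α] [DecidableEq α] [CommRing R]

theorem charpolyRev_permMatrix_eq_prod_fiberPerm {ι : Type*} [DecidableEq ι] {τ : Perm α}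
    {f : α → ι} (hf : f ∘ τ = f) {T : Finset ι} (hT : ∀ a, f a ∈ T) :
    (τ.permMatrix R).charpolyRev = ∏ i ∈ T, ((fiberPerm τ hf i).permMatrix R).charpolyRev := by
  classical
  let : LinearOrder ι := linearOrderOfSTO WellOrderingRel
  have h_tri : (1 - (X : R[X]) • (τ.permMatrix R).map C).BlockTriangular f := fun a b hab => by
    have h_ne : a ≠ b := by rintro rfl; exact hab.false
    have h_apply : τ a ≠ b := by rintro rfl; exact hab.ne (congr_fun hf a)
    simp [h_ne, h_apply]
  have h_empty : ∀ i ∈ T, i ∉ univ.image f →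
      ((1 - (X : R[X]) • (τ.permMatrix R).map C).toSquareBlock f i).det = 1 := fun i _ hi => by
    have : IsEmpty {a // f a = i} := ⟨fun a => hi (mem_image.2 ⟨a, mem_univ _, a.2⟩)⟩
    exact Matrix.det_isEmpty
  have h_block (i : ι) : (1 - (X : R[X]) • (τ.permMatrix R).map C).toSquareBlock f i =
      1 - (X : R[X]) • ((fiberPerm τ hf i).permMatrix R).map C := by
    ext a b : 2
    simp [fiberPerm, Matrix.toSquareBlock_def, Matrix.one_apply, Subtype.ext_iff]
  rw [Matrix.charpolyRev, h_tri.det, prod_subset (image_subset_iff.2 fun a _ => hT a) h_empty]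
  refine prod_congr rfl fun i _ => ?_
  rw [h_block, Matrix.charpolyRev]

theorem eq_zero_of_aeval_permMatrix_eq_zero [Nonempty α] {c : Perm α} (hc : c.IsCycleOn Set.univ)
    {q : R[X]} (hdeg : q.degree < Fintype.card α) (hq : aeval (c.permMatrix R) q = 0) : q = 0 := by
  by_contra h_ne
  obtain ⟨a⟩ := ‹Nonempty α›
  have hc' : c.IsCycleOn (univ : Finset α) := by rwa [coe_univ]
  have h_lt : q.natDegree < Fintype.card α := (natDegree_lt_iff_degree_lt h_ne).2 hdeg
  have h_entry : ∀ j ∈ range (Fintype.card α), j ≠ q.natDegree →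
      (c.permMatrix R ^ j) a ((c ^ q.natDegree) a) = 0 := fun j hj hne => by
    rw [← permMatrix_pow, permMatrix_apply, if_neg]
    exact fun h => hne <|
      ((hc'.pow_apply_eq_pow_apply (mem_univ a)).1 h).eq_of_lt_of_lt (mem_range.1 hj) h_lt
  have h_coeff : aeval (c.permMatrix R) q a ((c ^ q.natDegree) a) = q.leadingCoeff := by
    rw [aeval_eq_sum_range' h_lt, Matrix.sum_apply,
      sum_eq_single_of_mem _ (mem_range.2 h_lt)
        fun j hj hne => by rw [Matrix.smul_apply, h_entry j hj hne, smul_zero],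
      Matrix.smul_apply, ← permMatrix_pow, permMatrix_apply, if_pos rfl, smul_eq_mul, mul_one,
      leadingCoeff]
  rw [hq, Matrix.zero_apply] at h_coeff
  exact h_ne (leadingCoeff_eq_zero.1 h_coeff.symm)

theorem charpoly_permMatrix_of_isCycleOn_univ [Nonempty α] {c : Perm α}
    (hc : c.IsCycleOn Set.univ) : (c.permMatrix R).charpoly = X ^ Fintype.card α - 1 := by
  nontriviality R
  have hc' : c.IsCycleOn (univ : Finset α) := by rwa [coe_univ]
  have h_pow : c.permMatrix R ^ Fintype.card α = 1 := by
    have : c ^ Fintype.card α = 1 := Perm.ext fun b => hc'.pow_card_apply (mem_univ b)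
    rw [← permMatrix_pow, this, Matrix.permMatrix_one]
  have h_monic : (X ^ Fintype.card α - 1 : R[X]).Monic := monic_X_pow_sub_C 1 Fintype.card_ne_zero
  have h_degree : (X ^ Fintype.card α - 1 : R[X]).degree = Fintype.card α :=
    degree_X_pow_sub_C Fintype.card_pos 1
  refine sub_eq_zero.1 (eq_zero_of_aeval_permMatrix_eq_zero hc ?_ ?_)
  · rw [← h_degree]
    refine degree_sub_lt_right ?_ h_monic.ne_zero ?_
    · rw [Matrix.charpoly_degree_eq_dim, h_degree]
    · rw [Matrix.charpoly_monic, h_monic]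
  · simp [Matrix.aeval_self_charpoly, h_pow]

theorem charpolyRev_permMatrix_of_isCycleOn_univ [Nonempty α] {c : Perm α}
    (hc : c.IsCycleOn Set.univ) :
    (c.permMatrix R).charpolyRev = 1 - X ^ Fintype.card α := by
  nontriviality R
  rw [← Matrix.reverse_charpoly, reverse, Matrix.charpoly_natDegree_eq_dim,
    charpoly_permMatrix_of_isCycleOn_univ hc, reflect_sub, reflect_monomial, revAt_le le_rfl,
    Nat.sub_self, pow_zero, ← C_1, reflect_C, C_1, one_mul]

theorem charpolyRev_one : (1 : Matrix α α R).charpolyRev = (1 - X) ^ Fintype.card α := by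
  have h_smul : (1 - (X : R[X]) • (1 : Matrix α α R).map C) = (1 - X : R[X]) • 1 := by
    rw [Matrix.map_one C C_0 C_1, sub_smul, one_smul]
  rw [Matrix.charpolyRev, h_smul, Matrix.det_smul, Matrix.det_one, mul_one]

theorem charpolyRev_permMatrix_fiberPerm_cycleOf {τ c : Perm α} (hc : c ∈ τ.cycleFactorsFinset) :
    ((fiberPerm τ (cycleOf_comp_self τ) c).permMatrix R).charpolyRev = 1 - X ^ #c.support := by
  have h_mem : ∀ a, a ∈ c.support ↔ τ.cycleOf a = c := fun a =>
    (Perm.eq_cycleOf_of_mem_cycleFactorsFinset_iff τ c hc a).symm.trans eq_comm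
  have h_on : τ.IsCycleOn {a | τ.cycleOf a = c} := by
    rw [← Set.ext h_mem]
    exact Perm.isCycleOn_support_of_mem_cycleFactorsFinset hc
  obtain ⟨a, ha⟩ := (Perm.mem_cycleFactorsFinset_iff.1 hc).1.nonempty_support
  have : Nonempty {a // τ.cycleOf a = c} := ⟨⟨a, (h_mem a).1 ha⟩⟩
  have h_univ : (fiberPerm τ (cycleOf_comp_self τ) c).IsCycleOn Set.univ := h_on.subtypePerm
  rw [charpolyRev_permMatrix_of_isCycleOn_univ h_univ, Fintype.card_of_subtype _ h_mem]

theorem charpolyRev_permMatrix_fiberPerm_cycleOf_one (τ : Perm α) :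
    ((fiberPerm τ (cycleOf_comp_self τ) 1).permMatrix R).charpolyRev =
      (1 - X) ^ (Fintype.card α - #τ.support) := by
  have h_perm : fiberPerm τ (cycleOf_comp_self τ) 1 = 1 := Perm.ext fun a =>
    Subtype.ext ((Perm.cycleOf_eq_one_iff τ).1 a.2)
  have h_mem : ∀ a, a ∈ τ.supportᶜ ↔ τ.cycleOf a = 1 := fun a => by
    rw [mem_compl, Perm.notMem_support, Perm.cycleOf_eq_one_iff]
  rw [h_perm, Matrix.permMatrix_one, charpolyRev_one, Fintype.card_of_subtype _ h_mem, card_compl]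

theorem charpolyRev_permMatrix_eq_prod_partition (τ : Perm α) :
    (τ.permMatrix R).charpolyRev = (τ.partition.parts.map fun l => (1 - X ^ l : R[X])).prod := by
  have h_mem : ∀ a, τ.cycleOf a ∈ insert 1 τ.cycleFactorsFinset := fun a => by
    rw [mem_insert, ← Perm.cycleOf_ne_one_iff_mem_cycleFactorsFinset]
    exact em _
  have h_one : (1 : Perm α) ∉ τ.cycleFactorsFinset := fun h =>
    (Perm.mem_cycleFactorsFinset_iff.1 h).1.ne_one rfl
  have h_cycleType : (τ.cycleType.map fun l => (1 - X ^ l : R[X])).prod =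
      ∏ c ∈ τ.cycleFactorsFinset, (1 - X ^ #c.support) := by
    rw [Perm.cycleType_def, Multiset.map_map]
    rfl
  rw [charpolyRev_permMatrix_eq_prod_fiberPerm (cycleOf_comp_self τ) h_mem, prod_insert h_one,
    charpolyRev_permMatrix_fiberPerm_cycleOf_one,
    prod_congr rfl fun c hc => charpolyRev_permMatrix_fiberPerm_cycleOf hc,
    Perm.parts_partition, Multiset.map_add, Multiset.prod_add, h_cycleType,
    Multiset.map_replicate, Multiset.prod_replicate, pow_one, mul_comm]

theorem coeff_charpolyRev_eq_sum_minors (M : Matrix α α R) (m : ℕ) :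
    M.charpolyRev.coeff m =
      (-1) ^ m *
        ∑ s ∈ powersetCard m univ, (M.submatrix (Subtype.val : s → α) Subtype.val).det := by
  have h_neg : M.charpolyRev = (1 + (X : R[X]) • (-M).map C).det := by
    rw [Matrix.charpolyRev, Matrix.map_neg C (map_neg C), smul_neg, sub_eq_add_neg]
  rw [h_neg, Matrix.coeff_det_one_add_X_smul_eq_sum_minors, mul_sum]
  refine sum_congr rfl fun s hs => ?_
  rw [Matrix.submatrix_neg, Pi.neg_apply, Pi.neg_apply, Matrix.det_neg, Fintype.card_coe,
    mem_powersetCard_univ.1 hs]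

theorem sum_minor_permMatrix_eq_zero {s : Finset α} (hs : 1 < #s) :
    ∑ τ : Perm α, ((τ.permMatrix R).submatrix (Subtype.val : s → α) Subtype.val).det = 0 := by
  obtain ⟨a, ha, b, hb, hab⟩ := one_lt_card.1 hs
  refine sum_involution (fun τ _ => τ * swap a b) (fun τ _ => ?_) (fun τ _ _ => ?_)
    (fun τ _ => mem_univ _) (fun τ _ => mul_swap_mul_self a b τ)
  · rw [permMatrix_mul_swap_submatrix τ (⟨a, ha⟩ : s) ⟨b, hb⟩, Matrix.det_permute,
      Perm.sign_swap (by simpa using hab)]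
    simp
  · simpa using hab

theorem sum_trace_permMatrix [Nonempty α] :
    ∑ τ : Perm α, (τ.permMatrix R).trace = (Fintype.card α).factorial := by
  have h_unique := (MulAction.pretransitive_iff_unique_quotient_of_nonempty (Perm α) α).1
    inferInstance
  let := h_unique.some
  have h_burnside := MulAction.sum_card_fixedBy_eq_card_orbits_mul_card_group (Perm α) α
  rw [Fintype.card_unique, one_mul, Fintype.card_perm] at h_burnside
  rw [← h_burnside, Nat.cast_sum]
  refine sum_congr rfl fun τ _ => ?_
  rw [Matrix.trace_permutation, ← Set.fintypeCard_eq_ncard]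
  rfl

theorem sum_charpolyRev_permMatrix [Nonempty α] :
    ∑ τ : Perm α, (τ.permMatrix R).charpolyRev = (Fintype.card α).factorial • (1 - X) := by
  ext m
  rw [finsetSum_coeff, coeff_smul, coeff_sub, coeff_one, coeff_X, nsmul_eq_mul]
  match m with
  | 0 => simp [coeff_zero_eq_eval_zero, Fintype.card_perm]
  | 1 => simp [← sum_trace_permMatrix, Matrix.coeff_charpolyRev_eq_neg_trace]
  | m + 2 =>
    simp only [coeff_charpolyRev_eq_sum_minors, ← mul_sum]
    rw [sum_comm, sum_eq_zero fun s hs => sum_minor_permMatrix_eq_zero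
      (by rw [mem_powersetCard_univ.1 hs]; omega)]
    simp

theorem sum_charpolyRev_permMatrix_compStabilizer_of_surjective {ι : Type*} [Fintype ι]
    [DecidableEq ι] {f : α → ι} (hf : f.Surjective) :
    ∑ τ ∈ compStabilizer f, (τ.permMatrix R).charpolyRev =
      #(compStabilizer f) • (1 - X) ^ Fintype.card ι := by
  have h_nonempty (i : ι) : Nonempty {a // f a = i} := nonempty_subtype.2 (hf i)
  have h_card : #(compStabilizer f) = ∏ i, (Fintype.card {a // f a = i}).factorial := by
    rw [← DomMulAct.stabilizer_card, Fintype.card_subtype, compStabilizer]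
  calc ∑ τ ∈ compStabilizer f, (τ.permMatrix R).charpolyRev
      = ∑ τ : {τ : Perm α // f ∘ τ = f},
          ∏ i, ((fiberPerm τ.1 τ.2 i).permMatrix R).charpolyRev := by
        rw [sum_subtype _ fun τ => mem_compStabilizer]
        exact sum_congr rfl fun τ _ =>
          charpolyRev_permMatrix_eq_prod_fiberPerm τ.2 fun a => mem_univ (f a)
    _ = ∑ g : ∀ i, Perm {a // f a = i}, ∏ i, ((g i).permMatrix R).charpolyRev :=
        Fintype.sum_bijective _ (bijective_fiberPerm f) _ _ fun _ => rfl
    _ = ∏ i, ∑ g : Perm {a // f a = i}, (g.permMatrix R).charpolyRev :=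
        (Fintype.prod_sum fun i (g : Perm {a // f a = i}) => (g.permMatrix R).charpolyRev).symm
    _ = #(compStabilizer f) • (1 - X) ^ Fintype.card ι := by
        simp only [sum_charpolyRev_permMatrix, nsmul_eq_mul]
        rw [prod_mul_distrib, prod_const, card_univ, h_card, Nat.cast_prod]

theorem sum_charpolyRev_permMatrix_compStabilizer {D : Type*} [DecidableEq D] (x : α → D) :
    ∑ τ ∈ compStabilizer x, (τ.permMatrix R).charpolyRev =
      #(compStabilizer x) • (1 - X) ^ #(univ.image x) := by
  let f : α → univ.image x := fun a => ⟨x a, mem_image_of_mem x (mem_univ a)⟩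
  have h_surj : f.Surjective := fun ⟨y, hy⟩ => by
    obtain ⟨a, -, rfl⟩ := mem_image.1 hy
    exact ⟨a, rfl⟩
  have h_stabilizer : compStabilizer x = compStabilizer f := by
    ext τ
    rw [mem_compStabilizer, mem_compStabilizer]
    exact Subtype.val_injective.comp_left.eq_iff (a := f ∘ τ) (b := f)
  rw [h_stabilizer, sum_charpolyRev_permMatrix_compStabilizer_of_surjective h_surj,
    Fintype.card_coe]

end

section

variable {α D : Type*} [Fintype α] [DecidableEq α] [DecidableEq D]

theorem card_filter_comp_eq_comp (x : α → D) (σ : Perm α) :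
    #{τ : Perm α | x ∘ ⇑τ = x ∘ σ} = #(compStabilizer (x ∘ σ)) := by
  refine card_equiv (Equiv.mulLeft σ⁻¹) fun τ => ?_
  rw [mem_filter_univ, mem_compStabilizer, coe_mulLeft, Perm.coe_mul, Function.comp_assoc,
    ← Function.comp_assoc σ, ← Perm.coe_mul, mul_inv_cancel, Perm.coe_one, Function.id_comp]

theorem sum_card_compStabilizer_image_comp (x : α → D) :
    ∑ y ∈ univ.image fun τ : Perm α => x ∘ ⇑τ, #(compStabilizer y) =
      (Fintype.card α).factorial := by
  rw [← Fintype.card_perm, ← card_univ, card_eq_sum_card_image fun τ : Perm α => x ∘ ⇑τ]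
  refine sum_congr rfl fun y hy => ?_
  obtain ⟨σ, -, rfl⟩ := mem_image.1 hy
  exact (card_filter_comp_eq_comp x σ).symm

end

theorem exists_perm_comp_eq_of_map_univ_eq {α D : Type*} [Fintype α] {x y : α → D}
    (h : (univ : Finset α).val.map x = (univ : Finset α).val.map y) :
    ∃ τ : Perm α, x ∘ τ = y := by
  classical
  have h_card (c : D) : Fintype.card {a // y a = c} = Fintype.card {a // x a = c} := by
    have h_count := congrArg (Multiset.count c) h
    rw [Multiset.count_map, Multiset.count_map] at h_count
    simpa only [Fintype.card_subtype, card_def, filter_val, eq_comm] using h_count.symm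
  let e (c : D) : {a // y a = c} ≃ {a // x a = c} := Fintype.equivOfCardEq (h_card c)
  exact ⟨ofFiberEquiv e, funext (ofFiberEquiv_map e)⟩

section

variable {D : Type*} {k : ℕ}

theorem msetOf_eq_map_univ (x : Fin k → D) : msetOf x = (univ : Finset (Fin k)).val.map x := by
  simp [msetOf]

theorem msetOf_comp_perm (x : Fin k → D) (τ : Perm (Fin k)) : msetOf (x ∘ τ) = msetOf x :=
  Multiset.coe_eq_coe.2 (τ.ofFn_comp_perm x)

theorem msetOf_eq_msetOf_iff {x y : Fin k → D} :
    msetOf x = msetOf y ↔ ∃ τ : Perm (Fin k), x ∘ τ = y := by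
  refine ⟨fun h => exists_perm_comp_eq_of_map_univ_eq ?_, ?_⟩
  · rwa [← msetOf_eq_map_univ, ← msetOf_eq_map_univ]
  · rintro ⟨τ, rfl⟩
    exact (msetOf_comp_perm x τ).symm

variable [DecidableEq D]

theorem toFinset_msetOf (x : Fin k → D) : (msetOf x).toFinset = univ.image x := by
  rw [msetOf_eq_map_univ, Multiset.toFinset_map, val_toFinset]

theorem sum_card_compStabilizer_eq_factorial_mul {X : Finset (Fin k → D)}
    (hX : ∀ x ∈ X, ∀ τ : Perm (Fin k), x ∘ τ ∈ X) :
    ∑ x ∈ X, #(compStabilizer x) = k.factorial * #(MX X) := by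
  have h_fiber : ∀ m ∈ MX X, ∑ x ∈ X with msetOf x = m, #(compStabilizer x) = k.factorial := by
    intro m hm
    obtain ⟨x, hx, rfl⟩ := mem_image.1 hm
    have h_orbit : X.filter (msetOf · = msetOf x) = univ.image fun τ : Perm (Fin k) => x ∘ ⇑τ := by
      ext y
      rw [mem_filter, eq_comm (a := msetOf y), msetOf_eq_msetOf_iff, mem_image_univ_iff_mem_range,
        Set.mem_range]
      exact and_iff_right_of_imp fun ⟨τ, hτ⟩ => hτ ▸ hX x hx τ
    rw [h_orbit, sum_card_compStabilizer_image_comp, Fintype.card_fin]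
  rw [← sum_fiberwise_of_maps_to fun x hx => mem_image_of_mem msetOf hx, ← MX,
    sum_congr rfl h_fiber, sum_const, smul_eq_mul, mul_comm]

theorem wbar_eq_coeff_charpolyRev (d : ℕ) (τ : Perm (Fin k)) :
    wbar d τ = ((τ.permMatrix ℤ).charpolyRev.comp (1 - X)).coeff d := by
  rw [wbar, charpolyRev_permMatrix_eq_prod_partition, Perm.parts_partition, Fintype.card_fin,
    fullCycleType, multiset_prod_comp, Multiset.map_map]
  simp

theorem sum_wbar_compStabilizer (d : ℕ) (x : Fin k → D) :
    ∑ τ ∈ compStabilizer x, wbar d τ =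
      if #(msetOf x).toFinset = d then (#(compStabilizer x) : ℤ) else 0 := by
  have h_comp : ∑ τ ∈ compStabilizer x, (τ.permMatrix ℤ).charpolyRev.comp (1 - X) =
      #(compStabilizer x) • X ^ #(msetOf x).toFinset := by
    rw [← Polynomial.sum_comp, sum_charpolyRev_permMatrix_compStabilizer, toFinset_msetOf]
    simp
  rw [sum_congr rfl fun τ _ => wbar_eq_coeff_charpolyRev d τ, ← finsetSum_coeff, h_comp, coeff_smul,
    coeff_X_pow, nsmul_eq_mul, mul_ite, mul_one, mul_zero]
  simp only [eq_comm]

end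

/-- For a finite symmetric `X ⊆ D^k` and `1 ≤ d ≤ k`,
`k!·|M̄_d(X)| = Σ_{τ ∈ S_k} w̄_d(τ)·|X_τ|`. -/
theorem multiset_sieve_distinct {D : Type*} [DecidableEq D] (k d : ℕ) (hk : 0 < k)
    (hd : 0 < d) (hdk : d ≤ k) (X : Finset (Fin k → D))
    (hX : ∀ x ∈ X, ∀ τ : Equiv.Perm (Fin k), x ∘ τ ∈ X) :
    (Nat.factorial k : ℤ) * ((Mbar d X).card : ℤ) =
      ∑ τ : Equiv.Perm (Fin k), wbar d τ * ((X.filter fun x => x ∘ τ = x).card : ℤ) := by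
  let Y := X.filter fun x => #(msetOf x).toFinset = d
  have h_symm : ∀ x ∈ Y, ∀ τ : Perm (Fin k), x ∘ τ ∈ Y := fun x hx τ => by
    rw [mem_filter] at hx ⊢
    rw [msetOf_comp_perm]
    exact ⟨hX x hx.1 τ, hx.2⟩
  have h_orbits : k.factorial * #(Mbar d X) = ∑ x ∈ Y, #(compStabilizer x) := by
    rw [sum_card_compStabilizer_eq_factorial_mul h_symm, Mbar, MX, filter_image, MX]
  calc (k.factorial : ℤ) * #(Mbar d X)
      = ∑ x ∈ Y, (#(compStabilizer x) : ℤ) := mod_cast h_orbits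
    _ = ∑ x ∈ X, ∑ τ ∈ compStabilizer x, wbar d τ := by
        rw [sum_filter, sum_congr rfl fun x _ => sum_wbar_compStabilizer d x]
    _ = ∑ τ : Perm (Fin k), ∑ x ∈ X with x ∘ ⇑τ = x, wbar d τ :=
        sum_comm' fun x τ => by simp [mem_compStabilizer]
    _ = ∑ τ : Perm (Fin k), wbar d τ * #(X.filter fun x => x ∘ τ = x) := by
        simp only [sum_const, nsmul_eq_mul, mul_comm]
end

section
/- Let j and k be positive integers. Then Σ N'(a_1,…,a_k)·1!^{a_1}·2!^{a_2}⋯k!^{a_k}·(−1)^{a_1+⋯+a_k−1}·(a_1+⋯+a_k−1)! = (k−1)!·(1 − (j+1)·[(j+1) ∣ k]), where the sum is over all tuples (a_1,…,a_k) of non-negative integers with Σ_{i=1}^{k} i·a_i = k and a_{j+1} = a_{j+2} = ⋯ = a_k = 0, and [P] denotes 1 if P holds and 0 otherwise. (Equivalently, each summand equals (−1)^{a_1+⋯+a_k−1}·(a_1+⋯+a_k−1)!·k!/(a_1!·a_2!⋯a_k!).) -/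
/-!
Faà di Bruno's formula writes the coefficient of `X ^ k` in `log f`, where `f` has constant
coefficient `1`, as a sum over the types `a` of the set partitions of a `k`-element set, in which
`a` contributes `(-1) ^ (s - 1) * (s - 1)! / ∏ aᵢ! * ∏ fᵢ ^ aᵢ` with `s = ∑ aᵢ`. For
`f = 1 + X + ⋯ + X ^ j` the last product is `0` or `1`, and it is `1` exactly when `a` has no
blocks of size greater than `j`.
On the other hand, `log f = log (1 - X ^ (j + 1)) - log (1 - X)`, and `-log (1 - X ^ m)` has
coefficient `m / k` at `X ^ k` if `m ∣ k`, and `0` otherwise.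
-/

open PowerSeries

section PartitionTypes

/-- The types of the set partitions of a `k`-element set: `a i` is the number of blocks of size
`i + 1`, since `Fin k` starts at `0`. The bound `a i ≤ k` only serves to make the set of
candidates finite. -/
def partitionTypes (k : ℕ) : Finset (Fin k → ℕ) :=
  (Fintype.piFinset fun _ => Finset.range (k + 1)).filter fun a =>
    ∑ i : Fin k, ((i : ℕ) + 1) * a i = k

variable {k : ℕ} {a : Fin k → ℕ}

theorem sum_le_sum_succ_mul (a : Fin k → ℕ) :
    ∑ i, a i ≤ ∑ i : Fin k, ((i : ℕ) + 1) * a i :=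
  Finset.sum_le_sum fun i _ => Nat.le_mul_of_pos_left _ i.val.succ_pos

theorem mem_partitionTypes :
    a ∈ partitionTypes k ↔ ∑ i : Fin k, ((i : ℕ) + 1) * a i = k := by
  simp only [partitionTypes, Finset.mem_filter, Fintype.mem_piFinset, Finset.mem_range,
    and_iff_right_iff_imp]
  intro ha i
  have hi : a i ≤ ∑ i, a i := Finset.single_le_sum_of_canonicallyOrdered (Finset.mem_univ i)
  have := sum_le_sum_succ_mul a
  omega

theorem sum_le_of_mem_partitionTypes (ha : a ∈ partitionTypes k) : ∑ i, a i ≤ k :=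
  (sum_le_sum_succ_mul a).trans_eq (mem_partitionTypes.1 ha)

theorem sum_ne_zero_of_mem_partitionTypes (hk : k ≠ 0) (ha : a ∈ partitionTypes k) :
    ∑ i, a i ≠ 0 := by
  intro h
  have h0 : ∀ i, a i = 0 := by simpa using h
  rw [mem_partitionTypes] at ha
  simp only [h0, mul_zero, Finset.sum_const_zero] at ha
  exact hk ha.symm

end PartitionTypes

section FaaDiBruno

theorem trunc_succ_eq_sum_fin {R : Type*} [Semiring R] {g : R⟦X⟧}
    (hg : constantCoeff g = 0) (k : ℕ) :
    (trunc (k + 1) g : R⟦X⟧) = ∑ i : Fin k, C (coeff (i + 1) g) * X ^ ((i : ℕ) + 1) := by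
  ext n
  rw [Fin.sum_univ_eq_sum_range (fun i => C (coeff (i + 1) g) * X ^ (i + 1)), map_sum,
    Polynomial.coeff_coe, coeff_trunc]
  cases n with
  | zero => simp [hg, coeff_C_mul, coeff_X_pow]
  | succ n => simp [coeff_C_mul, coeff_X_pow]

theorem coeff_pow_eq_sum_partitionTypes {R : Type*} [CommSemiring R] {g : R⟦X⟧}
    (hg : constantCoeff g = 0) (k s : ℕ) :
    coeff k (g ^ s) = ∑ a ∈ partitionTypes k with ∑ i, a i = s,
      (Nat.multinomial Finset.univ a : R) * ∏ i : Fin k, coeff (i + 1) g ^ a i := by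
  have hterm (a : Fin k → ℕ) :
      ∏ i : Fin k, (C (coeff (i + 1) g) * X ^ ((i : ℕ) + 1)) ^ a i =
        C (∏ i : Fin k, coeff (i + 1) g ^ a i) * X ^ ∑ i : Fin k, ((i : ℕ) + 1) * a i := by
    simp only [mul_pow, Finset.prod_mul_distrib, ← pow_mul, Finset.prod_pow_eq_pow_sum,
      map_prod, map_pow]
  have hindex : {a ∈ partitionTypes k | ∑ i, a i = s} =
      {a ∈ Finset.piAntidiag (Finset.univ : Finset (Fin k)) s |
        k = ∑ i : Fin k, ((i : ℕ) + 1) * a i} := by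
    ext a
    simp [mem_partitionTypes, and_comm, eq_comm]
  rw [← coeff_coe_trunc_of_lt k.lt_succ_self, ← trunc_trunc_pow,
    coeff_coe_trunc_of_lt k.lt_succ_self, trunc_succ_eq_sum_fin hg,
    Finset.sum_pow_eq_sum_piAntidiag, map_sum, hindex, Finset.sum_filter]
  refine Finset.sum_congr rfl fun a _ => ?_
  rw [hterm, ← map_natCast (C (R := R)), ← mul_assoc, ← map_mul, coeff_C_mul, coeff_X_pow,
    mul_ite, mul_one, mul_zero]

theorem coeff_subst_eq_sum_partitionTypes {R S : Type*} [CommRing R] [CommRing S] [Algebra R S]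
    (f : R⟦X⟧) {g : S⟦X⟧} (hg : constantCoeff g = 0) (k : ℕ) :
    coeff k (f.subst g) = ∑ a ∈ partitionTypes k, coeff (∑ i, a i) f •
      ((Nat.multinomial Finset.univ a : S) * ∏ i : Fin k, coeff (i + 1) g ^ a i) := by
  have hmaps : ∀ a ∈ partitionTypes k, ∑ i, a i ∈ Finset.range (k + 1) := fun _ ha =>
    Finset.mem_range_succ_iff.2 (sum_le_of_mem_partitionTypes ha)
  rw [coeff_subst' (.of_constantCoeff_zero' hg), ← Finset.sum_fiberwise_of_maps_to hmaps]
  simp only [coeff_pow_eq_sum_partitionTypes hg]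
  rw [finsum_eq_sum_of_support_subset (s := Finset.range (k + 1))]
  · refine Finset.sum_congr rfl fun s _ => ?_
    rw [Finset.smul_sum]
    refine Finset.sum_congr rfl fun a ha => ?_
    rw [(Finset.mem_filter.1 ha).2]
  · refine Function.support_subset_iff'.2 fun s hs => ?_
    rw [Finset.filter_false_of_mem, Finset.sum_empty, smul_zero]
    rintro a ha rfl
    exact hs (hmaps a ha)

end FaaDiBruno

theorem multinomial_eq_factorial_div {ι K : Type*} [Semifield K] [CharZero K] (s : Finset ι)
    (a : ι → ℕ) :
    (Nat.multinomial s a : K) =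
      ((∑ i ∈ s, a i).factorial : K) / ∏ i ∈ s, ((a i).factorial : K) := by
  rw [eq_div_iff (Finset.prod_ne_zero_iff.2 fun i _ => Nat.cast_ne_zero.2 (a i).factorial_ne_zero),
    mul_comm]
  exact_mod_cast Nat.multinomial_spec s a

theorem coeff_geom_sum {R : Type*} [Semiring R] (m n : ℕ) :
    coeff n (∑ i ∈ Finset.range m, (X : R⟦X⟧) ^ i) = if n < m then 1 else 0 := by
  simp [coeff_X_pow]

theorem constantCoeff_geom_sum {R : Type*} [Semiring R] {m : ℕ} (hm : m ≠ 0) :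
    constantCoeff (∑ i ∈ Finset.range m, (X : R⟦X⟧) ^ i) = 1 := by
  rw [← coeff_zero_eq_constantCoeff_apply, coeff_geom_sum, if_pos hm.pos]

theorem prod_ite_one_zero_pow {ι R : Type*} [Fintype ι] [CommMonoidWithZero R] (p : ι → Prop)
    [DecidablePred p] (a : ι → ℕ) :
    ∏ i, (if p i then (1 : R) else 0) ^ a i = if ∀ i, ¬ p i → a i = 0 then 1 else 0 := by
  have hterm (i : ι) : (if p i then (1 : R) else 0) ^ a i = if ¬ p i → a i = 0 then 1 else 0 := by
    by_cases hp : p i <;> simp [hp, zero_pow_eq]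
  simp only [hterm, Fintype.prod_ite_zero, Finset.prod_const_one]

section Logarithm

variable {A : Type*} [CommRing A] [Algebra ℚ A]

theorem coeff_logOf_eq_sum_partitionTypes {f : A⟦X⟧} (hf : constantCoeff f = 1) {k : ℕ}
    (hk : k ≠ 0) :
    coeff k (logOf f) = ∑ a ∈ partitionTypes k,
      ((-1 : ℚ) ^ (∑ i, a i - 1) * ((∑ i, a i - 1).factorial : ℚ) /
        ∏ i, ((a i).factorial : ℚ)) • ∏ i : Fin k, coeff (i + 1) f ^ a i := by
  rw [logOf_eq, coeff_subst_eq_sum_partitionTypes _ (by simp [hf])]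
  have hshift (i : Fin k) : coeff (i + 1) (f - 1) = coeff (i + 1) f := by simp [coeff_one]
  simp only [hshift]
  refine Finset.sum_congr rfl fun a ha => ?_
  obtain ⟨s, hs⟩ := Nat.exists_eq_succ_of_ne_zero (sum_ne_zero_of_mem_partitionTypes hk ha)
  have hweight : (-1 : ℚ) ^ (s + 1 + 1) / (s + 1 : ℕ) * ((s + 1).factorial : ℚ) =
      (-1) ^ s * (s.factorial : ℚ) := by
    rw [Nat.factorial_succ]
    push_cast
    field_simp
    ring
  rw [coeff_log, if_neg (sum_ne_zero_of_mem_partitionTypes hk ha),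
    ← map_natCast (algebraMap ℚ A) (Nat.multinomial _ _), multinomial_eq_factorial_div, hs,
    smul_eq_mul, ← mul_assoc, ← map_mul, ← Algebra.smul_def, ← mul_div_assoc, hweight,
    Nat.succ_sub_one]

theorem mul_derivative_logOf {f : A⟦X⟧} (hf : constantCoeff f = 1) :
    f * d⁄dX A (logOf f) = d⁄dX A f := by
  have hsubst : HasSubst (f - 1) := .of_constantCoeff_zero' (by simp [hf])
  have hlog : (1 + X) * d⁄dX A (log A) = 1 := by
    rw [deriv_log]
    ext n
    cases n <;> simp [add_mul, coeff_succ_X_mul, pow_succ, coeff_one]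
  have hinv : f * (d⁄dX A (log A)).subst (f - 1) = 1 := by
    have h := congrArg (substAlgHom (R := A) hsubst) hlog
    rwa [map_mul, map_add, map_one, substAlgHom_X, add_sub_cancel, coe_substAlgHom] at h
  rw [logOf_eq, derivative_subst hsubst, ← mul_assoc, hinv, one_mul, map_sub, derivative_one,
    sub_zero]

theorem logOf_mul {f g : A⟦X⟧} (hf : constantCoeff f = 1) (hg : constantCoeff g = 1) :
    logOf (f * g) = logOf f + logOf g := by
  have hfg : constantCoeff (f * g) = 1 := by rw [map_mul, hf, hg, one_mul]
  have hunit : IsUnit (f * g) := isUnit_iff_constantCoeff.2 (hfg ▸ isUnit_one)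
  have : IsAddTorsionFree A := .of_module_rat A
  refine derivative.ext (hunit.mul_left_cancel ?_) ?_
  · rw [mul_derivative_logOf hfg, map_add, Derivation.leibniz, smul_eq_mul, smul_eq_mul]
    linear_combination -g * mul_derivative_logOf hf - f * mul_derivative_logOf hg
  · rw [map_add, constantCoeff_logOf hfg, constantCoeff_logOf hf, constantCoeff_logOf hg,
      add_zero]

/-- At `n = 0` both sides vanish, the right-hand side because `1 / 0 = 0`. -/
theorem coeff_logOf_one_sub_X (n : ℕ) :
    coeff n (logOf (1 - X : A⟦X⟧)) = -algebraMap ℚ A (1 / n) := by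
  have h : logOf (1 - X : A⟦X⟧) = rescale (-1) (log A) := by
    rw [logOf_eq, rescale_eq_subst, sub_sub_cancel_left, neg_one_smul]
  rw [h, coeff_rescale, coeff_log]
  cases n with
  | zero => simp
  | succ n =>
    rw [if_neg n.succ_ne_zero, ← map_one (algebraMap ℚ A), ← map_neg, ← map_pow, ← map_mul,
      ← map_neg, ← mul_div_assoc, ← pow_add, Odd.neg_one_pow (by grind), neg_div]

theorem coeff_logOf_one_sub_X_pow {m : ℕ} (hm : m ≠ 0) (n : ℕ) :
    coeff n (logOf (1 - X ^ m : A⟦X⟧)) = -algebraMap ℚ A (if m ∣ n then m / n else 0) := by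
  have h : logOf (1 - X ^ m : A⟦X⟧) = (logOf (1 - X : A⟦X⟧)).expand m hm := by
    have hX : HasSubst (1 - X - 1 : A⟦X⟧) := .of_constantCoeff_zero' (by simp)
    rw [logOf_eq, logOf_eq, expand_apply, subst_comp_subst_apply hX (.X_pow hm),
      ← expand_apply m hm, map_sub, map_sub, map_one, expand_X]
  rw [h, coeff_expand]
  split_ifs with hdvd
  · rw [coeff_logOf_one_sub_X, Nat.cast_div_charZero hdvd, one_div_div]
  · rw [map_zero, neg_zero]

theorem coeff_logOf_geom_sum {m : ℕ} (hm : m ≠ 0) (k : ℕ) :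
    coeff k (logOf (∑ i ∈ Finset.range m, (X : A⟦X⟧) ^ i)) =
      algebraMap ℚ A ((1 - m * if m ∣ k then 1 else 0) / k) := by
  have hlog : logOf (∑ i ∈ Finset.range m, (X : A⟦X⟧) ^ i) =
      logOf (1 - X ^ m) - logOf (1 - X) := by
    rw [eq_sub_iff_add_eq, ← logOf_mul (constantCoeff_geom_sum hm) (by simp), geom_sum_mul_neg]
  rw [hlog, map_sub, coeff_logOf_one_sub_X_pow hm, coeff_logOf_one_sub_X, sub_neg_eq_add,
    neg_add_eq_sub, ← map_sub, sub_div, mul_ite, mul_one, mul_zero, ite_div, zero_div]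

end Logarithm

/-- **Combinatorial identity for blocks of bounded size.**  For positive integers `j, k`,
`Σ N'(a_1,…,a_k)·1!^{a_1}⋯k!^{a_k}·(−1)^{s−1}·(s−1)! = (k−1)!·(1 − (j+1)·[(j+1) ∣ k])`,
the sum being over tuples of non-negative integers with `Σ i·a_i = k` and
`a_i = 0` for `i > j`, and `s = a_1 + ⋯ + a_k`.  Each summand equals
`(−1)^{s−1}·(s−1)!·k!/(a_1!⋯a_k!)`, which is how it is written here (in `ℚ`). -/
theorem partition_identity_bounded_blocks (j k : ℕ) (hj : 0 < j) (hk : 0 < k) :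
    ∑ a ∈ (Fintype.piFinset fun _ : Fin k => Finset.range (k + 1)).filter
        (fun a : Fin k → ℕ =>
          (∑ i : Fin k, ((i : ℕ) + 1) * a i) = k ∧ ∀ i : Fin k, j < (i : ℕ) + 1 → a i = 0),
      (-1 : ℚ) ^ ((∑ i : Fin k, a i) - 1) * (((∑ i : Fin k, a i) - 1).factorial : ℚ) *
        (k.factorial : ℚ) / ∏ i : Fin k, ((a i).factorial : ℚ) =
      ((k - 1).factorial : ℚ) * (1 - ((j : ℚ) + 1) * (if (j + 1) ∣ k then 1 else 0)) := by
  have hcoeff (a : Fin k → ℕ) : (∏ i : Fin k,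
      coeff ((i : ℕ) + 1) (∑ n ∈ Finset.range (j + 1), (X : ℚ⟦X⟧) ^ n) ^ a i) =
        if ∀ i : Fin k, j < (i : ℕ) + 1 → a i = 0 then 1 else 0 := by
    simp only [coeff_geom_sum, prod_ite_one_zero_pow, not_lt, Nat.succ_le_iff]
  calc
    _ = (k.factorial : ℚ) * coeff k (logOf (∑ n ∈ Finset.range (j + 1), (X : ℚ⟦X⟧) ^ n)) := by
      rw [coeff_logOf_eq_sum_partitionTypes (constantCoeff_geom_sum j.succ_ne_zero) hk.ne',
        ← Finset.filter_filter, ← partitionTypes, Finset.sum_filter, Finset.mul_sum]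
      refine Finset.sum_congr rfl fun a _ => ?_
      rw [hcoeff, smul_eq_mul, mul_ite, mul_ite, mul_one, mul_zero, mul_zero]
      congr 1
      ring
    _ = _ := by
      rw [coeff_logOf_geom_sum j.succ_ne_zero, ← Nat.mul_factorial_pred hk.ne']
      push_cast
      simp only [eq_ratCast, Rat.cast_id]
      field_simp
end

section
/- Let k and d be positive integers with 1 ≤ d ≤ k. Then Σ N'(a_1,…,a_k)·1!^{a_1}·2!^{a_2}⋯k!^{a_k}·(−1)^{a_1+⋯+a_k−1}·(a_1+⋯+a_k−1)! = (k−1)!·(−1)^{d−1}·binom(k,d), where the sum is over all tuples (a_1,…,a_k) of non-negative integers with Σ_{i=1}^{k} i·a_i = k and a_1+⋯+a_k = d. (Equivalently, each summand equals (−1)^{d−1}·(d−1)!·k!/(a_1!·a_2!⋯a_k!).) -/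
/-!
With `m = k - d`, the constraints read `∑ a i = d` and `∑ i * a i = m` for `i` indexed from `0`, and
the summand is `(-1) ^ (d - 1) * k! / d` times the multinomial coefficient of `a`. By the
multinomial theorem these coefficients add up to the coefficient of `X ^ m` in
`(1 + X + ⋯ + X ^ (k - 1)) ^ d`. As `m < k`, this is also the coefficient of `X ^ m` in
`(1 - X)⁻ᵈ`, namely `d.multichoose m`.
-/

open Finset PowerSeries

theorem multichoose_succ_eq_choose (d m : ℕ) : (d + 1).multichoose m = (d + m).choose d := by
  rw [Nat.multichoose_eq, Nat.add_right_comm, Nat.add_sub_cancel, Nat.choose_symm_add]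

theorem add_mul_multichoose (d m : ℕ) :
    (d + m) * d.multichoose m = d * (d + m).choose d := by
  cases d with
  | zero => cases m <;> simp
  | succ d =>
    rw [multichoose_succ_eq_choose, Nat.add_right_comm, Nat.add_one_mul_choose_eq, mul_comm]

theorem coeff_sum_X_pow_pow {R ι : Type*} [CommSemiring R] [DecidableEq ι] (s : Finset ι)
    (w : ι → ℕ) (d m : ℕ) :
    coeff m ((∑ i ∈ s, (X : R⟦X⟧) ^ w i) ^ d) =
      ∑ a ∈ piAntidiag s d with ∑ i ∈ s, w i * a i = m, (Nat.multinomial s a : R) := by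
  rw [sum_pow_eq_sum_piAntidiag, map_sum, sum_filter]
  refine sum_congr rfl fun a _ => ?_
  simp_rw [← pow_mul, prod_pow_eq_pow_sum]
  rw [← map_natCast (C (R := R)), coeff_C_mul, coeff_X_pow, mul_ite, mul_one, mul_zero]
  simp only [eq_comm (a := m)]

theorem coe_trunc_mk_one {R : Type*} [Semiring R] (n : ℕ) :
    (trunc n (mk 1 : R⟦X⟧) : R⟦X⟧) = ∑ i ∈ range n, X ^ i := by
  ext m
  simp [coeff_trunc, coeff_X_pow]

theorem mk_one_pow_eq_mk_multichoose {R : Type*} [CommRing R] (d : ℕ) :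
    (mk 1 : R⟦X⟧) ^ d = mk fun m => (d.multichoose m : R) := by
  cases d with
  | zero =>
    ext m
    cases m <;> simp [coeff_one]
  | succ d =>
    rw [mk_one_pow_eq_mk_choose_add]
    ext m
    rw [coeff_mk, coeff_mk, multichoose_succ_eq_choose]

theorem coeff_geom_sum_pow {R : Type*} [CommRing R] {m n : ℕ} (hmn : m < n) (d : ℕ) :
    coeff m ((∑ i ∈ range n, (X : R⟦X⟧) ^ i) ^ d) = (d.multichoose m : R) := by
  rw [← coe_trunc_mk_one, ← coeff_coe_trunc_of_lt hmn, trunc_trunc_pow,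
    coeff_coe_trunc_of_lt hmn, mk_one_pow_eq_mk_multichoose, coeff_mk]

theorem sum_multinomial_eq_multichoose {m n : ℕ} (hmn : m < n) (d : ℕ) :
    ∑ a ∈ piAntidiag (univ : Finset (Fin n)) d with ∑ i : Fin n, (i : ℕ) * a i = m,
      Nat.multinomial univ a = d.multichoose m := by
  have h := coeff_geom_sum_pow (R := ℤ) hmn d
  rw [← Fin.sum_univ_eq_sum_range (fun i => (X : ℤ⟦X⟧) ^ i), coeff_sum_X_pow_pow] at h
  exact_mod_cast h

theorem filter_piFinset_range_eq_filter_piAntidiag {ι : Type*} [Fintype ι] [DecidableEq ι]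
    (w : ι → ℕ) {d n : ℕ} (hdn : d ≤ n) (m : ℕ) :
    {a ∈ Fintype.piFinset fun _ : ι => range (n + 1) |
        ∑ i, (w i + 1) * a i = d + m ∧ ∑ i, a i = d} =
      {a ∈ piAntidiag (univ : Finset ι) d | ∑ i, w i * a i = m} := by
  ext a
  have hle (i : ι) : a i ≤ ∑ j, a j := single_le_sum (fun j _ => Nat.zero_le (a j)) (mem_univ i)
  simp only [mem_filter, Fintype.mem_piFinset, mem_range, mem_piAntidiag, mem_univ, implies_true,
    and_true, add_one_mul, sum_add_distrib]
  constructor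
  · rintro ⟨-, hweight, hcard⟩
    exact ⟨hcard, by omega⟩
  · rintro ⟨(hcard : ∑ i, a i = d), hweight⟩
    exact ⟨fun i => Nat.lt_succ_of_le ((hle i).trans (hcard.trans_le hdn)), by omega, hcard⟩

theorem factorial_sum_sub_one_div_prod_factorial {K ι : Type*} [Semifield K] [CharZero K]
    (s : Finset ι) (a : ι → ℕ) (ha : ∑ i ∈ s, a i ≠ 0) :
    ((∑ i ∈ s, a i - 1).factorial : K) / ∏ i ∈ s, ((a i).factorial : K) =
      Nat.multinomial s a / (∑ i ∈ s, a i : ℕ) := by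
  have hprod : ∏ i ∈ s, ((a i).factorial : K) ≠ 0 :=
    prod_ne_zero_iff.mpr fun i _ => Nat.cast_ne_zero.mpr (Nat.factorial_ne_zero _)
  rw [div_eq_div_iff hprod (Nat.cast_ne_zero.mpr ha), mul_comm, mul_comm (Nat.multinomial s a : K)]
  exact_mod_cast (Nat.mul_factorial_pred ha).trans (Nat.multinomial_spec s a).symm

/-- **Combinatorial identity for partitions with a fixed number of blocks.**  For
`1 ≤ d ≤ k`, `Σ N'(a_1,…,a_k)·1!^{a_1}⋯k!^{a_k}·(−1)^{s−1}·(s−1)! =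
(k−1)!·(−1)^{d−1}·C(k,d)`, the sum being over tuples of non-negative integers with
`Σ i·a_i = k` and `a_1 + ⋯ + a_k = d`.  Each summand equals
`(−1)^{d−1}·(d−1)!·k!/(a_1!⋯a_k!)`, which is how it is written here (in `ℚ`). -/
theorem partition_identity_fixed_blocks (k d : ℕ) (hd : 1 ≤ d) (hdk : d ≤ k) :
    ∑ a ∈ (Fintype.piFinset fun _ : Fin k => Finset.range (k + 1)).filter
        (fun a : Fin k → ℕ =>
          (∑ i : Fin k, ((i : ℕ) + 1) * a i) = k ∧ (∑ i : Fin k, a i) = d),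
      (-1 : ℚ) ^ ((∑ i : Fin k, a i) - 1) * (((∑ i : Fin k, a i) - 1).factorial : ℚ) *
        (k.factorial : ℚ) / ∏ i : Fin k, ((a i).factorial : ℚ) =
      ((k - 1).factorial : ℚ) * (-1 : ℚ) ^ (d - 1) * (k.choose d : ℚ) := by
  obtain ⟨m, rfl⟩ := Nat.exists_eq_add_of_le hdk
  have hd0 : (d : ℚ) ≠ 0 := Nat.cast_ne_zero.mpr (by omega)
  have hchoose : ((d + m : ℕ) : ℚ) * d.multichoose m = d * (d + m).choose d :=
    mod_cast add_mul_multichoose d m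
  rw [filter_piFinset_range_eq_filter_piAntidiag _ hdk]
  calc
    _ = ∑ a ∈ piAntidiag (univ : Finset (Fin (d + m))) d with ∑ i : Fin (d + m), (i : ℕ) * a i = m,
        (-1 : ℚ) ^ (d - 1) * (d + m).factorial / d * Nat.multinomial univ a := by
      refine sum_congr rfl fun a ha => ?_
      have hcard : ∑ i, a i = d := (mem_piAntidiag.mp (mem_filter.mp ha).1).1
      have hterm := factorial_sum_sub_one_div_prod_factorial (K := ℚ) univ a (by omega)
      rw [mul_right_comm, mul_div_assoc, hterm, hcard, ← mul_div_assoc, mul_div_right_comm]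
    _ = (-1 : ℚ) ^ (d - 1) * (d + m).factorial / d * d.multichoose m := by
      rw [← mul_sum, ← Nat.cast_sum, sum_multinomial_eq_multichoose (by omega)]
    _ = ((d + m - 1).factorial : ℚ) * (-1) ^ (d - 1) * (d + m).choose d := by
      rw [← Nat.mul_factorial_pred (by omega : d + m ≠ 0), Nat.cast_mul, div_mul_eq_mul_div,
        div_eq_iff hd0]
      linear_combination (-1 : ℚ) ^ (d - 1) * ((d + m - 1).factorial : ℚ) * hchoose
end

section
/- Let j and k be positive integers. Then Σ_{π} (∏_{B a block of π} |B|!)·μ(π, 1̂) = (k−1)!·(1 − (j+1)·[(j+1) ∣ k]), where the sum is over all set partitions π of {1,…,k} all of whose blocks have size at most j, and [P] denotes 1 if P holds and 0 otherwise. -/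
open scoped Classical

/-! The exponential generating function of the block weights `n! · [n ≤ j]` is
`1 + x + ⋯ + x ^ j = (1 - x ^ (j + 1)) / (1 - x)`, whose logarithm is the exponential generating
function of `κ n = (n - 1)! (1 - (j + 1) [(j + 1) ∣ n])`. By the exponential formula, applied inside
every block of `π`, the product of the weights over the blocks of `π` is the sum over `σ ≤ π` of the
products of the `κ #C` over the blocks `C` of `σ`. Möbius inversion at `⊤` then isolates the term
`σ = ⊤`, which is `κ k`. -/

open Finset

section MoebiusInversion

variable {P R : Type*} [PartialOrder P] [Ring R] {μ : P → P → R}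

lemma eq_incidenceAlgebra_mu_of_le [LocallyFiniteOrder P] (hμ_self : ∀ x, μ x x = 1)
    (hμ_sum : ∀ x y, x < y → ∑ z ∈ Icc x y, μ x z = 0) {x y : P} (hxy : x ≤ y) :
    μ x y = IncidenceAlgebra.mu R x y := by
  obtain rfl | hlt := hxy.eq_or_lt
  · rw [hμ_self, IncidenceAlgebra.mu_self]
  · have hsum : μ x y + ∑ z ∈ Ico x y, μ x z = 0 := by
      rw [← hμ_sum x y hlt, ← Ico_insert_right hxy, sum_insert right_notMem_Ico]
    rw [IncidenceAlgebra.mu_eq_neg_sum_Ico_of_ne hlt.ne, eq_neg_of_add_eq_zero_left hsum]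
    refine congr_arg Neg.neg (sum_congr rfl fun z hz ↦ ?_)
    exact eq_incidenceAlgebra_mu_of_le hμ_self hμ_sum (mem_Ico.1 hz).1
termination_by #(Icc x y)
decreasing_by
  exact card_lt_card (Icc_ssubset_Icc_right hxy le_rfl (mem_Ico.1 hz).2)

lemma eq_sum_le_moebius_mul [Fintype P] [OrderBot P] (hμ_self : ∀ x, μ x x = 1)
    (hμ_sum : ∀ x y, x < y → ∑ z with x ≤ z ∧ z ≤ y, μ x z = 0) {f g : P → R}
    (hg : ∀ x, g x = ∑ y with y ≤ x, f y) (x : P) :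
    f x = ∑ y with y ≤ x, μ y x * g y := by
  let : LocallyFiniteOrder P := Fintype.toLocallyFiniteOrder
  have hIic (x : P) : Iic x = univ.filter (· ≤ x) := by ext; simp
  have hIcc (x y : P) : Icc x y = univ.filter fun z ↦ x ≤ z ∧ z ≤ y := by ext; simp
  rw [IncidenceAlgebra.moebius_inversion_bot f g (fun x ↦ by rw [hg, hIic]) x, hIic]
  refine sum_congr rfl fun y hy ↦ ?_
  rw [eq_incidenceAlgebra_mu_of_le hμ_self (fun x y hxy ↦ by rw [hIcc, hμ_sum x y hxy])
    (mem_filter.1 hy).2]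

end MoebiusInversion

section RefinementLattice

variable {α : Type*} [DistribLattice α] [OrderBot α] [DecidableEq α] {a : α}

lemma mem_parts_restrict_of_le {σ π : Finpartition a} (hσπ : σ ≤ π) {b : α}
    (hb : b ∈ π.parts) {c : α} :
    c ∈ (σ.restrict (π.le hb)).parts ↔ c ∈ σ.parts ∧ c ≤ b := by
  have le_of_inf_ne_bot {d : α} (hd : d ∈ σ.parts) (hdb : d ⊓ b ≠ ⊥) : d ≤ b := by
    obtain ⟨b', hb', hdb'⟩ := hσπ hd
    obtain rfl : b' = b := by
      by_contra hne
      exact hdb ((π.disjoint hb' hb hne).mono_left hdb').eq_bot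
    exact hdb'
  simp only [Finpartition.restrict, mem_erase, mem_image]
  constructor
  · rintro ⟨hne, d, hd, rfl⟩
    exact ⟨by rwa [inf_eq_left.2 (le_of_inf_ne_bot hd hne)], inf_le_right⟩
  · rintro ⟨hc, hcb⟩
    exact ⟨σ.ne_bot hc, c, hc, inf_eq_left.2 hcb⟩

lemma bind_le (π : Finpartition a) (τ : ∀ b ∈ π.parts, Finpartition b) : π.bind τ ≤ π := by
  intro c hc
  obtain ⟨b, hb, hcb⟩ := Finpartition.mem_bind.1 hc
  exact ⟨b, hb, (τ b hb).le hcb⟩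

lemma bind_restrict_of_le {σ π : Finpartition a} (hσπ : σ ≤ π) :
    π.bind (fun _ hb ↦ σ.restrict (π.le hb)) = σ := by
  ext c
  rw [Finpartition.mem_bind]
  constructor
  · rintro ⟨b, hb, hc⟩
    exact ((mem_parts_restrict_of_le hσπ hb).1 hc).1
  · intro hc
    obtain ⟨b, hb, hcb⟩ := hσπ hc
    exact ⟨b, hb, (mem_parts_restrict_of_le hσπ hb).2 ⟨hc, hcb⟩⟩

lemma restrict_bind (π : Finpartition a) (τ : ∀ b ∈ π.parts, Finpartition b) {b : α}
    (hb : b ∈ π.parts) : (π.bind τ).restrict (π.le hb) = τ b hb := by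
  ext c
  rw [mem_parts_restrict_of_le (bind_le π τ) hb, Finpartition.mem_bind]
  refine ⟨?_, fun hc ↦ ⟨⟨b, hb, hc⟩, (τ b hb).le hc⟩⟩
  rintro ⟨⟨b', hb', hc⟩, hcb⟩
  obtain rfl : b' = b := by
    by_contra hne
    have hdisj : Disjoint b' b := π.disjoint hb' hb hne
    exact (τ b' hb').ne_bot hc (disjoint_self.1 (hdisj.mono ((τ b' hb').le hc) hcb))
  exact hc

lemma prod_parts_bind {M : Type*} [CommMonoid M] (π : Finpartition a)
    (τ : ∀ b ∈ π.parts, Finpartition b) (f : α → M) :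
    ∏ c ∈ (π.bind τ).parts, f c = ∏ b ∈ π.parts.attach, ∏ c ∈ (τ b b.2).parts, f c :=
  Finpartition.sum_combine (M := Additive M) (fun b : π.parts ↦ τ b b.2) π.supIndep.attach f

end RefinementLattice

lemma sup_erase_parts {α : Type*} [GeneralizedBooleanAlgebra α] [DecidableEq α] {a b : α}
    (P : Finpartition a) (hb : b ∈ P.parts) : (P.parts.erase b).sup id = a \ b := by
  have hdisj : Disjoint b ((P.parts.erase b).sup id) :=
    P.supIndep (erase_subset _ _) hb (notMem_erase _ _)
  have hsup : b ⊔ (P.parts.erase b).sup id = a := by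
    simpa only [insert_erase hb, P.sup_parts, id] using
      (sup_insert (s := P.parts.erase b) (f := id) (b := b)).symm
  rw [← hdisj.sup_sdiff_cancel_left, hsup]

section PartitionSums

variable {α : Type*} [DecidableEq α] {s : Finset α}

variable {R : Type*} [CommSemiring R]

lemma sum_le_prod_parts (π : Finpartition s) (f : Finset α → R) :
    ∑ σ with σ ≤ π, ∏ C ∈ σ.parts, f C =
      ∏ B ∈ π.parts, ∑ τ : Finpartition B, ∏ C ∈ τ.parts, f C := by
  rw [prod_sum]
  refine sum_bij' (fun σ _ _ hB ↦ σ.restrict (π.le hB)) (fun τ _ ↦ π.bind τ) ?_ ?_ ?_ ?_ ?_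
  · simp
  · simp [bind_le]
  · exact fun σ hσ ↦ bind_restrict_of_le (mem_filter.1 hσ).2
  · exact fun τ _ ↦ funext₂ fun B hB ↦ restrict_bind π τ hB
  · intro σ hσ
    rw [← prod_parts_bind π fun _ hB ↦ σ.restrict (π.le hB),
      bind_restrict_of_le (mem_filter.1 hσ).2]

lemma sum_mem_parts_prod_parts {B : Finset α} (hBs : B ⊆ s) (hB : B.Nonempty)
    (f : Finset α → R) :
    ∑ P : Finpartition s with B ∈ P.parts, ∏ C ∈ P.parts, f C =
      f B * ∑ Q : Finpartition (s \ B), ∏ C ∈ Q.parts, f C := by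
  have notMem_parts (Q : Finpartition (s \ B)) : B ∉ Q.parts := fun h ↦
    hB.ne_empty (disjoint_self.1 (disjoint_of_subset_right (Q.subset h) disjoint_sdiff))
  rw [mul_sum]
  refine sum_bij'
    (fun P hP ↦ P.ofSubset (erase_subset B P.parts) (sup_erase_parts P (mem_filter.1 hP).2))
    (fun Q _ ↦ Q.extend hB.ne_empty sdiff_disjoint (sdiff_union_of_subset hBs)) ?_ ?_ ?_ ?_ ?_
  · simp only [mem_univ, implies_true]
  · simp only [mem_filter, mem_univ, true_and, Finpartition.extend, mem_insert_self, implies_true]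
  · intro P hP
    exact Finpartition.ext (insert_erase (mem_filter.1 hP).2)
  · intro Q _
    exact Finpartition.ext (erase_insert (notMem_parts Q))
  · intro P hP
    exact (mul_prod_erase _ _ (mem_filter.1 hP).2).symm

lemma sum_prod_parts_eq_sum_powerset_erase {a : α} (ha : a ∈ s) (f : Finset α → R) :
    ∑ P : Finpartition s, ∏ B ∈ P.parts, f B =
      ∑ D ∈ (s.erase a).powerset, f (s \ D) * ∑ Q : Finpartition D, ∏ B ∈ Q.parts, f B := by
  have hmaps (P : Finpartition s) : s \ P.part a ∈ (s.erase a).powerset := by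
    rw [mem_powerset, subset_erase]
    exact ⟨sdiff_subset, fun h ↦ (mem_sdiff.1 h).2 (P.mem_part ha)⟩
  rw [← sum_fiberwise_of_maps_to fun P _ ↦ hmaps P]
  refine sum_congr rfl fun D hD ↦ ?_
  obtain ⟨hDs, haD⟩ := subset_erase.1 (mem_powerset.1 hD)
  have haB : a ∈ s \ D := mem_sdiff.2 ⟨ha, haD⟩
  have hfiber (P : Finpartition s) : s \ P.part a = D ↔ s \ D ∈ P.parts := by
    constructor
    · rintro rfl
      rw [Finset.sdiff_sdiff_eq_self (P.part_subset a)]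
      exact P.part_mem.2 ha
    · intro h
      rw [P.part_eq_of_mem h haB, Finset.sdiff_sdiff_eq_self hDs]
  simp only [hfiber]
  rw [sum_mem_parts_prod_parts sdiff_subset ⟨a, haB⟩, Finset.sdiff_sdiff_eq_self hDs]

end PartitionSums

section ExponentialFormula

variable {R : Type*}

/-- `κ` is the sequence of formal cumulants of `w`: the exponential generating functions
`W = ∑ w n xⁿ / n!` and `K = ∑_{n ≥ 1} κ n xⁿ / n!` satisfy `W = exp K`. It links the weights of
blocks to the values isolated by Möbius inversion. The encoding by `W 0 = 1` and the coefficients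
of `W' = K' W` avoids division by factorials. -/
structure IsCumulantSeq [CommSemiring R] (κ w : ℕ → R) : Prop where
  zero : w 0 = 1
  succ (n : ℕ) : w (n + 1) = ∑ m ∈ range (n + 1), n.choose m * (κ (n + 1 - m) * w m)

variable {α : Type*} [DecidableEq α] {s : Finset α}

lemma IsCumulantSeq.sum_prod_parts [CommSemiring R] {κ w : ℕ → R} (h : IsCumulantSeq κ w)
    (s : Finset α) : ∑ P : Finpartition s, ∏ B ∈ P.parts, κ #B = w #s := by
  induction s using Finset.strongInduction with
  | H s ih =>
  obtain rfl | ⟨a, ha⟩ := s.eq_empty_or_nonempty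
  · have : Unique (Finpartition (∅ : Finset α)) :=
      inferInstanceAs (Unique (Finpartition (⊥ : Finset α)))
    have hparts : (default : Finpartition (∅ : Finset α)).parts = ∅ :=
      Finpartition.parts_eq_empty_iff.2 rfl
    rw [Fintype.sum_unique, hparts, prod_empty, card_empty, h.zero]
  · obtain ⟨n, hn⟩ : ∃ n, #(s.erase a) = n := ⟨_, rfl⟩
    have hs : #s = n + 1 := by rw [← hn, card_erase_add_one ha]
    calc ∑ P : Finpartition s, ∏ B ∈ P.parts, κ #B
      _ = ∑ D ∈ (s.erase a).powerset, κ #(s \ D) *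
            ∑ Q : Finpartition D, ∏ B ∈ Q.parts, κ #B :=
        sum_prod_parts_eq_sum_powerset_erase ha _
      _ = ∑ D ∈ (s.erase a).powerset, κ (n + 1 - #D) * w #D := by
        refine sum_congr rfl fun D hD ↦ ?_
        have hDs : D ⊂ s := (mem_powerset.1 hD).trans_ssubset (erase_ssubset ha)
        rw [ih D hDs, card_sdiff_of_subset hDs.subset, hs]
      _ = ∑ m ∈ range (n + 1), n.choose m * (κ (n + 1 - m) * w m) := by
        rw [sum_powerset_apply_card fun m ↦ κ (n + 1 - m) * w m, hn]
        simp only [nsmul_eq_mul]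
      _ = w #s := by rw [hs, h.succ]

lemma parts_top_of_nonempty (hs : s.Nonempty) : (⊤ : Finpartition s).parts = {s} :=
  (subset_singleton_iff.1 (Finpartition.parts_top_subset s)).resolve_left
    fun h ↦ hs.ne_empty (Finpartition.parts_eq_empty_iff.1 h)

lemma IsCumulantSeq.sum_prod_parts_mul_moebius_top [CommRing R] {κ w : ℕ → R}
    (h : IsCumulantSeq κ w) (hs : s.Nonempty) {μ : Finpartition s → Finpartition s → R}
    (hμ_self : ∀ x, μ x x = 1)
    (hμ_sum : ∀ x y, x < y → ∑ z with x ≤ z ∧ z ≤ y, μ x z = 0) :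
    ∑ π : Finpartition s, (∏ B ∈ π.parts, w #B) * μ π ⊤ = κ #s := by
  have expFormula (π : Finpartition s) :
      ∏ B ∈ π.parts, w #B = ∑ σ with σ ≤ π, ∏ C ∈ σ.parts, κ #C := by
    simp only [sum_le_prod_parts, h.sum_prod_parts]
  have inversion := eq_sum_le_moebius_mul hμ_self hμ_sum expFormula ⊤
  simpa only [parts_top_of_nonempty hs, prod_singleton, le_top, filter_true, mul_comm] using
    inversion.symm

end ExponentialFormula

lemma card_range_filter_dvd_sub {r n : ℕ} (hr : 0 < r) (hrn : r ≤ n) :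
    #{m ∈ range r | r ∣ n - m} = 1 := by
  have dvd_iff {m : ℕ} (hm : m < r) : r ∣ n - m ↔ m = n % r := by
    rw [← Nat.modEq_iff_dvd' (hm.le.trans hrn), Nat.ModEq, Nat.mod_eq_of_lt hm]
  rw [card_eq_one]
  refine ⟨n % r, ?_⟩
  ext m
  rw [mem_filter, mem_range, mem_singleton]
  exact ⟨fun ⟨hm, hd⟩ ↦ (dvd_iff hm).1 hd,
    fun hm ↦ have hlt := hm ▸ Nat.mod_lt n hr; ⟨hlt, (dvd_iff hlt).2 hm⟩⟩

section BoundedBlocks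

variable {R : Type*} [CommRing R]

lemma sum_lt_one_sub_mul_ite_dvd {r : ℕ} (hr : 0 < r) (n : ℕ) :
    ∑ m ∈ range n with m < r, (1 - (r : R) * if r ∣ n - m then 1 else 0) =
      if n < r then (n : R) else 0 := by
  split_ifs with hnr
  · have hfilter : {m ∈ range n | m < r} = range n :=
      filter_true_of_mem fun m hm ↦ (mem_range.1 hm).trans hnr
    have not_dvd {m : ℕ} (hm : m ∈ range n) : ¬ r ∣ n - m :=
      Nat.not_dvd_of_pos_of_lt (Nat.sub_pos_of_lt (mem_range.1 hm)) (by lia)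
    rw [hfilter, sum_congr rfl fun m hm ↦ by rw [if_neg (not_dvd hm), mul_zero, sub_zero],
      sum_const, card_range, nsmul_one]
  · have hfilter : {m ∈ range n | m < r} = range r := by
      ext m
      simp only [mem_filter, mem_range]
      lia
    rw [hfilter, sum_sub_distrib, ← mul_sum, sum_boole,
      card_range_filter_dvd_sub hr (Nat.le_of_not_lt hnr)]
    simp

lemma isCumulantSeq_ite_le_factorial (j : ℕ) :
    IsCumulantSeq (R := R)
      (fun n ↦ ((n - 1).factorial : R) * (1 - ((j : R) + 1) * if (j + 1) ∣ n then 1 else 0))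
      (fun n ↦ if n ≤ j then (n.factorial : R) else 0) where
  zero := by simp
  succ n := by
    have hterm : ∀ m ∈ range (n + 1),
        (n.choose m : R) * (((n + 1 - m - 1).factorial *
          (1 - ((j : R) + 1) * if (j + 1) ∣ n + 1 - m then 1 else 0)) *
            if m ≤ j then (m.factorial : R) else 0) =
          n.factorial * if m < j + 1 then
            1 - ((j + 1 : ℕ) : R) * (if (j + 1) ∣ n + 1 - m then 1 else 0) else 0 := by
      intro m hm
      rw [← Nat.choose_mul_factorial_mul_factorial (mem_range_succ_iff.1 hm)]
      simp only [Nat.sub_right_comm n.succ m, Nat.lt_succ_iff]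
      push_cast
      split_ifs <;> ring
    rw [sum_congr rfl hterm, ← mul_sum, ← sum_filter,
      sum_lt_one_sub_mul_ite_dvd j.add_one_pos]
    simp only [Order.lt_add_one_iff, mul_ite, mul_zero, Nat.factorial_succ, Nat.cast_mul, mul_comm]

theorem mobius_identity_bounded_blocks_general {α : Type*} [DecidableEq α] {s : Finset α}
    (hs : s.Nonempty) (j : ℕ) (μ : Finpartition s → Finpartition s → R)
    (hμ_self : ∀ x, μ x x = 1)
    (hμ_sum : ∀ x y, x < y → ∑ z with x ≤ z ∧ z ≤ y, μ x z = 0) :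
    ∑ π : Finpartition s with ∀ B ∈ π.parts, #B ≤ j,
      (∏ B ∈ π.parts, ((#B).factorial : R)) * μ π ⊤ =
      ((#s - 1).factorial : R) * (1 - ((j : R) + 1) * if (j + 1) ∣ #s then 1 else 0) := by
  rw [← (isCumulantSeq_ite_le_factorial j).sum_prod_parts_mul_moebius_top hs hμ_self hμ_sum,
    sum_filter]
  refine sum_congr rfl fun π _ ↦ ?_
  rw [prod_ite_zero, ite_zero_mul]

end BoundedBlocks

/-- **Möbius-function identity for partitions with blocks of bounded size.**  In the
lattice `Π_k` of set partitions of `{1,…,k}` ordered by refinement, if `μ` satisfies the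
defining recursion of the Möbius function (`μ(x,x) = 1` and `Σ_{x ≤ z ≤ y} μ(x,z) = 0`
for `x < y`), then `Σ_π (∏_{B block of π} |B|!)·μ(π,1̂) = (k−1)!·(1−(j+1)·[(j+1) ∣ k])`,
the sum being over partitions `π` all of whose blocks have size at most `j`. -/
theorem mobius_identity_bounded_blocks (j k : ℕ) (hj : 0 < j) (hk : 0 < k)
    (μ : Finpartition (Finset.univ : Finset (Fin k)) →
         Finpartition (Finset.univ : Finset (Fin k)) → ℤ)
    (hμ₁ : ∀ x, μ x x = 1)
    (hμ₂ : ∀ x y, x < y → ∑ z ∈ Finset.univ.filter (fun z => x ≤ z ∧ z ≤ y), μ x z = 0) :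
    ∑ π ∈ Finset.univ.filter
        (fun π : Finpartition (Finset.univ : Finset (Fin k)) =>
          ∀ B ∈ π.parts, B.card ≤ j),
      (∏ B ∈ π.parts, (B.card.factorial : ℤ)) * μ π ⊤ =
      ((k - 1).factorial : ℤ) * (1 - ((j : ℤ) + 1) * (if (j + 1) ∣ k then 1 else 0)) := by
  have : NeZero k := ⟨hk.ne'⟩
  have h := mobius_identity_bounded_blocks_general (univ_nonempty (α := Fin k)) j μ hμ₁ hμ₂
  rw [card_fin] at h
  convert h
end

section
/- Let k and d be positive integers with 1 ≤ d ≤ k. Then Σ_{π} (∏_{B a block of π} |B|!)·μ(π, 1̂) = (k−1)!·(−1)^{d−1}·binom(k,d), where the sum is over all set partitions π of {1,…,k} having exactly d blocks. -/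
open scoped Classical

/-!
Colour the points of `α` with `n` colours. A colouring is constant on the blocks of a partition `P`
in `n ^ #P.parts` ways, and its colour classes are exactly the blocks of `P` in
`n.descFactorial #P.parts` ways. Hence `∑ Q ≥ P, n.descFactorial #Q.parts = n ^ #P.parts`, and
Möbius inversion turns this into `∑ Q ≥ P, μ P Q * n ^ #Q.parts = n.descFactorial #P.parts`, whose
linear coefficient in `n` is `μ P ⊤`.

Weighting each colouring by the product of the factorials of the sizes of its colour classes, the
total weight is `n.ascFactorial (card α)`. Sorting the colourings by their colour classes, this is
`∑ P, n.descFactorial #P.parts * ∏ B ∈ P.parts, (#B)!`, and the `d`-th forward difference at `n = 0`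
isolates the partitions with exactly `d` blocks.
-/

open Finset Polynomial fwdDiff
open scoped Nat

theorem eq_sum_mobius_smul_of_eq_sum_ge {ι R M : Type*} [Fintype ι] [PartialOrder ι] [Ring R]
    [AddCommGroup M] [Module R M] {μ : ι → ι → R} (hμ₁ : ∀ x, μ x x = 1)
    (hμ₂ : ∀ x y, x < y → ∑ z with x ≤ z ∧ z ≤ y, μ x z = 0) {f g : ι → M}
    (hfg : ∀ x, f x = ∑ y with x ≤ y, g y) (x : ι) : g x = ∑ y with x ≤ y, μ x y • f y := by
  have sum_Icc (w : ι) (hw : x ≤ w) :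
      ∑ y with x ≤ y ∧ y ≤ w, μ x y = if w = x then 1 else 0 := by
    rcases hw.eq_or_lt with rfl | hlt
    · simp [← le_antisymm_iff, hμ₁, filter_eq]
    · rw [hμ₂ x w hlt, if_neg hlt.ne']
  calc g x = ∑ w with x ≤ w, (if w = x then (1 : R) else 0) • g w := by simp
    _ = ∑ w with x ≤ w, ∑ y with x ≤ y ∧ y ≤ w, μ x y • g w :=
        sum_congr rfl fun w hw => by rw [← sum_Icc w (mem_filter.1 hw).2, sum_smul]
    _ = ∑ y with x ≤ y, ∑ w with y ≤ w, μ x y • g w :=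
        sum_comm' fun w y => by
          simp only [mem_filter, mem_univ, true_and]
          exact ⟨fun h => ⟨h.2.2, h.2.1⟩, fun h => ⟨h.2.trans h.1, h.2, h.1⟩⟩
    _ = ∑ y with x ≤ y, μ x y • f y := by simp only [hfg, smul_sum]

/-- Functions with kernel `r` correspond to injections on the quotient by `r`; compare
`Setoid.liftEquiv`, which only asks for the kernel to contain `r`. -/
def kerEqEquivEmbedding {α β : Type*} (r : Setoid α) :
    {f : α → β // Setoid.ker f = r} ≃ (Quotient r ↪ β) where
  toFun f := ⟨Quotient.lift f.1 f.2.ge, (Setoid.lift_injective_iff_ker_eq_of_le f.2.ge).2 f.2⟩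
  invFun g := ⟨g ∘ Quotient.mk r, by
    ext a b
    simp [g.injective.eq_iff, Setoid.ker_def, Quotient.eq]⟩
  left_inv f := rfl
  right_inv g := by ext ⟨a⟩; rfl

section KernelPartition

variable {α β : Type*} [Fintype α] [DecidableEq α]

theorem part_ofSetoid_eq_iff (r : Setoid α) (a b : α) :
    (Finpartition.ofSetoid r).part a = (Finpartition.ofSetoid r).part b ↔ r a b := by
  rw [eq_comm, ← Finpartition.mem_part_iff_part_eq_part _ (mem_univ b) (mem_univ a),
    Finpartition.mem_part_ofSetoid_iff_rel]

theorem le_iff_ker_part_le {P Q : Finpartition (univ : Finset α)} :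
    P ≤ Q ↔ Setoid.ker P.part ≤ Setoid.ker Q.part := by
  constructor
  · intro h a b hab
    obtain ⟨C, hC, hPC⟩ := h (P.part_mem.2 (mem_univ a))
    have ha : a ∈ C := hPC (P.mem_part_self.2 (mem_univ a))
    have hb : b ∈ C := hPC ((P.mem_part_iff_part_eq_part (mem_univ b) (mem_univ a)).2 hab.symm)
    exact (Q.part_eq_of_mem hC ha).trans (Q.part_eq_of_mem hC hb).symm
  · intro h B hB
    obtain ⟨a, ha⟩ := P.nonempty_of_mem_parts hB
    refine ⟨Q.part a, Q.part_mem.2 (mem_univ a), fun b hb => ?_⟩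
    rw [Q.mem_part_iff_part_eq_part (mem_univ b) (mem_univ a)]
    exact h ((P.part_eq_of_mem hB hb).trans (P.part_eq_of_mem hB ha).symm)

/-- Partitions of a finite type, ordered by refinement, correspond to equivalence relations; this
makes the kernel calculus of `Setoid` available for partitions. -/
noncomputable def finpartitionOrderIsoSetoid :
    Finpartition (univ : Finset α) ≃o Setoid α where
  toFun P := Setoid.ker P.part
  invFun r := Finpartition.ofSetoid r
  left_inv P := by
    have h := part_ofSetoid_eq_iff (Setoid.ker P.part)
    exact le_antisymm (le_iff_ker_part_le.2 fun a b => (h a b).1)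
      (le_iff_ker_part_le.2 fun a b => (h a b).2)
  right_inv r := Setoid.ext (part_ofSetoid_eq_iff r)
  map_rel_iff' := le_iff_ker_part_le.symm

/-- The partition of a finite type into the nonempty fibres of a function, that is, the blocks
are the colour classes of the colouring `f`. -/
noncomputable def kerPartition (f : α → β) : Finpartition (univ : Finset α) :=
  finpartitionOrderIsoSetoid.symm (Setoid.ker f)

theorem card_quotient_finpartitionOrderIsoSetoid (P : Finpartition (univ : Finset α)) :
    Fintype.card (Quotient (finpartitionOrderIsoSetoid P)) = #P.parts := by
  have range_part : Set.range P.part = P.parts := by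
    rw [← Set.image_univ, ← coe_univ]
    exact P.part_surjOn.image_eq_of_mapsTo fun a ha => P.part_mem.2 ha
  rw [← Fintype.card_coe]
  exact Fintype.card_congr ((Setoid.quotientKerEquivRange P.part).trans (.setCongr range_part))

theorem prod_parts_kerPartition [Fintype β] {M : Type*} [CommMonoid M] (f : α → β)
    {g : Finset α → M} (hg : g ∅ = 1) :
    ∏ B ∈ (kerPartition f).parts, g B = ∏ b, g {a | f a = b} := by
  have parts_eq : (kerPartition f).parts =
      (univ.image f).image fun b => ({a | f a = b} : Finset α) := by
    rw [image_image]
    change univ.image (fun a => ({b | f a = f b} : Finset α)) = _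
    simp only [Function.comp_def, eq_comm]
  rw [parts_eq, prod_image_of_disjoint hg]
  · refine prod_subset (subset_univ _) fun b _ hb => ?_
    rw [filter_false_of_mem (by simpa using hb), hg]
  · exact fun b _ c _ hbc => disjoint_filter.2 fun a _ hb hc => hbc (hb.symm.trans hc)

theorem card_le_kerPartition [Fintype β] (P : Finpartition (univ : Finset α)) :
    #{f : α → β | P ≤ kerPartition f} = Fintype.card β ^ #P.parts := by
  rw [← card_quotient_finpartitionOrderIsoSetoid, ← Fintype.card_fun, ← Fintype.card_subtype]
  exact Fintype.card_congr ((Equiv.subtypeEquivRight fun f =>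
    finpartitionOrderIsoSetoid.le_symm_apply).trans (Setoid.liftEquiv _))

theorem card_kerPartition_eq [Fintype β] (P : Finpartition (univ : Finset α)) :
    #{f : α → β | kerPartition f = P} = (Fintype.card β).descFactorial #P.parts := by
  rw [← card_quotient_finpartitionOrderIsoSetoid, ← Fintype.card_embedding_eq,
    ← Fintype.card_subtype]
  exact Fintype.card_congr ((Equiv.subtypeEquivRight fun f =>
    finpartitionOrderIsoSetoid.symm_apply_eq).trans (kerEqEquivEmbedding _))

theorem sum_kerPartition [Fintype β] {M : Type*} [AddCommMonoid M]
    (F : Finpartition (univ : Finset α) → M) :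
    ∑ f : α → β, F (kerPartition f) = ∑ P, (Fintype.card β).descFactorial #P.parts • F P := by
  rw [← sum_fiberwise univ (kerPartition : (α → β) → _)]
  refine sum_congr rfl fun P _ => ?_
  rw [sum_congr rfl fun f hf => by rw [(mem_filter.1 hf).2], sum_const, card_kerPartition_eq]

end KernelPartition

section MobiusValue

variable {α : Type*} [Fintype α] [DecidableEq α]

theorem sum_descFactorial_card_parts_of_le (P : Finpartition (univ : Finset α)) (n : ℕ) :
    ∑ Q with P ≤ Q, n.descFactorial #Q.parts = n ^ #P.parts := by
  calc ∑ Q with P ≤ Q, n.descFactorial #Q.parts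
      = ∑ f : α → Fin n, if P ≤ kerPartition f then 1 else 0 := by
        simp [sum_kerPartition (fun Q => if P ≤ Q then 1 else 0), sum_filter]
    _ = n ^ #P.parts := by
        rw [← card_filter, card_le_kerPartition, Fintype.card_fin]

theorem X_pow_card_parts_eq_sum_descPochhammer (R : Type*) [CommRing R]
    (P : Finpartition (univ : Finset α)) :
    (X : R[X]) ^ #P.parts = ∑ Q with P ≤ Q, descPochhammer R #Q.parts := by
  have over_int : (X : ℤ[X]) ^ #P.parts = ∑ Q with P ≤ Q, descPochhammer ℤ #Q.parts := by
    refine eq_of_infinite_eval_eq _ _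
      ((Set.infinite_range_of_injective (Nat.cast_injective (R := ℤ))).mono ?_)
    rintro _ ⟨n, rfl⟩
    simp only [Set.mem_ofPred_eq, eval_pow, eval_X, eval_finsetSum,
      descPochhammer_eval_eq_descFactorial]
    exact_mod_cast (sum_descFactorial_card_parts_of_le P n).symm
  simpa [Polynomial.map_sum, descPochhammer_map] using congrArg (map (Int.castRingHom R)) over_int

theorem coeff_one_descPochhammer_succ (R : Type*) [CommRing R] (d : ℕ) :
    (descPochhammer R (d + 1)).coeff 1 = (-1) ^ d * (d ! : R) := by
  have h : (d ! : R) = (-1) ^ d * (descPochhammer R d).eval (-1) := by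
    rw [← ascPochhammer_eval_neg_eq_descPochhammer, neg_neg, ascPochhammer_eval_one]
  rw [h, ← mul_assoc, ← mul_pow, neg_one_mul, neg_neg, one_pow, one_mul, descPochhammer_succ_left,
    coeff_X_mul, coeff_zero_eq_eval_zero, eval_comp]
  simp

theorem card_parts_eq_one_iff_eq_top {ι : Type*} [Lattice ι] [OrderBot ι] {a : ι}
    [Decidable (a = ⊥)] (ha : a ≠ ⊥) (P : Finpartition a) : #P.parts = 1 ↔ P = ⊤ := by
  constructor
  · intro h
    obtain ⟨b, hb⟩ := card_eq_one.1 h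
    have hba : b = a := by simpa [hb] using P.sup_parts
    refine eq_top_iff.2 fun c hc => ⟨a, by simp [hb, hba], ?_⟩
    exact (Finpartition.le _ hc)
  · rintro rfl
    exact le_antisymm (card_le_card (Finpartition.parts_top_subset a))
      (card_pos.2 (Finpartition.parts_nonempty _ ha))

theorem mobius_top_eq [Nonempty α] {R : Type*} [CommRing R]
    {μ : Finpartition (univ : Finset α) → Finpartition (univ : Finset α) → R}
    (hμ₁ : ∀ x, μ x x = 1) (hμ₂ : ∀ x y, x < y → ∑ z with x ≤ z ∧ z ≤ y, μ x z = 0)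
    (P : Finpartition (univ : Finset α)) :
    μ P ⊤ = (-1) ^ (#P.parts - 1) * ((#P.parts - 1)! : R) := by
  have inversion : descPochhammer R #P.parts = ∑ Q with P ≤ Q, μ P Q • X ^ #Q.parts :=
    eq_sum_mobius_smul_of_eq_sum_ge hμ₁ hμ₂ (X_pow_card_parts_eq_sum_descPochhammer R) P
  have univ_ne_bot : (univ : Finset α) ≠ ⊥ := univ_nonempty.ne_empty
  obtain ⟨d, hd⟩ : ∃ d, #P.parts = d + 1 :=
    Nat.exists_eq_add_one_of_ne_zero (card_pos.2 (P.parts_nonempty univ_ne_bot)).ne'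
  have linear_coeff := congrArg (coeff · 1) inversion
  simp only [hd, coeff_one_descPochhammer_succ, finsetSum_coeff, coeff_smul, coeff_X_pow,
    @eq_comm _ 1, card_parts_eq_one_iff_eq_top univ_ne_bot] at linear_coeff
  simpa [hd] using linear_coeff.symm

end MobiusValue

theorem fwdDiff_iter_descFactorial_zero (j d : ℕ) :
    (Δ_[1])^[d] (fun n => n.descFactorial j : ℕ → ℤ) 0 = if d = j then (d ! : ℤ) else 0 := by
  have h : (fun n => n.descFactorial j : ℕ → ℤ) = (j ! : ℤ) • fun n : ℕ => (n.choose j : ℤ) := by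
    ext n
    simp [Nat.descFactorial_eq_factorial_mul_choose]
  rw [h, fwdDiff_iter_const_smul, Pi.smul_apply, fwdDiff_iter_choose_zero]
  split_ifs with hdj <;> simp [hdj]

theorem fwdDiff_iter_ascFactorial_zero {k d : ℕ} (hdk : d ≤ k) :
    (Δ_[1])^[d] (fun n => n.ascFactorial k : ℕ → ℤ) 0 = k ! * (k - 1).choose (k - d) := by
  obtain ⟨j, rfl⟩ := Nat.exists_eq_add_of_le hdk
  have h : (fun n => n.ascFactorial (d + j) : ℕ → ℤ) =
      ((d + j)! : ℤ) • fun n : ℕ => ((n + (d + j - 1)).choose (d + j) : ℤ) := by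
    ext n
    rw [Nat.ascFactorial_eq_factorial_mul_choose', Pi.smul_apply, smul_eq_mul, Nat.cast_mul]
    rcases Nat.eq_zero_or_pos (d + j) with h0 | hpos
    · simp [h0]
    · rw [Nat.add_sub_assoc hpos]
  rw [h, fwdDiff_iter_const_smul, Pi.smul_apply,
    fwdDiff_iter_comp_add 1 (fun n : ℕ => (n.choose (d + j) : ℤ)), fwdDiff_iter_choose]
  simp

section FactorialWeights

theorem prod_factorial_card_fiber_cons {β : Type*} [Fintype β] {k : ℕ} (b : β) (f : Fin k → β) :
    ∏ c, (#{i | (Fin.cons b f : Fin (k + 1) → β) i = c})! =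
      (#{i | f i = b} + 1) * ∏ c, (#{i | f i = c})! := by
  rw [← mul_prod_erase univ _ (mem_univ b), ← mul_prod_erase univ _ (mem_univ b), ← mul_assoc]
  congr 1
  · simp [Fin.card_filter_univ_succ, Nat.factorial_succ]
  · refine prod_congr rfl fun c hc => ?_
    simp [Fin.card_filter_univ_succ, (ne_of_mem_erase hc).symm]

theorem sum_prod_factorial_card_fiber_fin (β : Type*) [Fintype β] (k : ℕ) :
    ∑ f : Fin k → β, ∏ b, (#{i | f i = b})! = (Fintype.card β).ascFactorial k := by
  induction k with
  | zero => simp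
  | succ k ih =>
    have sum_card_fiber (f : Fin k → β) :
        ∑ b, (#{i | f i = b} + 1) = Fintype.card β + k := by
      rw [sum_add_distrib, ← card_eq_sum_card_fiberwise (f := f) (t := univ) fun _ _ => mem_univ _]
      simp [add_comm]
    rw [← (Fin.consEquiv fun _ => β).sum_comp, Fintype.sum_prod_type_right, Nat.ascFactorial_succ,
      ← ih, mul_sum]
    refine sum_congr rfl fun f _ => ?_
    rw [← sum_card_fiber f, sum_mul]
    exact sum_congr rfl fun b _ => prod_factorial_card_fiber_cons b f

variable (α : Type*) [Fintype α] [DecidableEq α]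

theorem sum_prod_factorial_card_fiber (β : Type*) [Fintype β] :
    ∑ f : α → β, ∏ b, (#{a | f a = b})! =
      (Fintype.card β).ascFactorial (Fintype.card α) := by
  rw [← sum_prod_factorial_card_fiber_fin,
    ← ((Fintype.equivFin α).symm.arrowCongr (.refl β)).sum_comp]
  refine sum_congr rfl fun f _ => prod_congr rfl fun b _ => congrArg Nat.factorial ?_
  exact card_equiv (Fintype.equivFin α) (by simp)

theorem sum_descFactorial_mul_prod_factorial (n : ℕ) :
    ∑ P : Finpartition (univ : Finset α), n.descFactorial #P.parts * ∏ B ∈ P.parts, (#B)! =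
      n.ascFactorial (Fintype.card α) := by
  calc _ = ∑ f : α → Fin n, ∏ B ∈ (kerPartition f).parts, (#B)! := by
        simp [sum_kerPartition fun P => ∏ B ∈ P.parts, (#B)!]
    _ = n.ascFactorial (Fintype.card α) := by
        simp only [prod_parts_kerPartition _ (g := fun B => (#B)!) rfl,
          sum_prod_factorial_card_fiber, Fintype.card_fin]

variable {α}

theorem factorial_mul_sum_prod_factorial {d : ℕ} (hd : d ≤ Fintype.card α) :
    d ! * ∑ P : Finpartition (univ : Finset α) with #P.parts = d, ∏ B ∈ P.parts, (#B)! =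
      (Fintype.card α)! * (Fintype.card α - 1).choose (Fintype.card α - d) := by
  have expansion : (fun n => n.ascFactorial (Fintype.card α) : ℕ → ℤ) =
      ∑ P : Finpartition (univ : Finset α),
        ((∏ B ∈ P.parts, (#B)! : ℕ) : ℤ) • fun n : ℕ => (n.descFactorial #P.parts : ℤ) := by
    ext n
    simp [← sum_descFactorial_mul_prod_factorial, mul_comm]
  have diff_at_zero := fwdDiff_iter_ascFactorial_zero hd
  rw [expansion, fwdDiff_iter_finsetSum, Finset.sum_apply] at diff_at_zero
  simp only [fwdDiff_iter_const_smul, Pi.smul_apply, fwdDiff_iter_descFactorial_zero, smul_eq_mul,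
    mul_ite, mul_zero, @eq_comm _ d, ← sum_filter, ← sum_mul] at diff_at_zero
  rw [mul_comm]
  exact_mod_cast diff_at_zero

theorem factorial_mul_sum_prod_factorial_succ [Nonempty α] (d : ℕ) :
    d ! * ∑ P : Finpartition (univ : Finset α) with #P.parts = d + 1, ∏ B ∈ P.parts, (#B)! =
      (Fintype.card α - 1)! * (Fintype.card α).choose (d + 1) := by
  obtain hlt | hle := Nat.lt_or_ge (Fintype.card α) (d + 1)
  · have no_partition (P : Finpartition (univ : Finset α)) : #P.parts ≠ d + 1 :=
      (P.card_parts_le_card.trans_lt hlt).ne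
    simp [no_partition, Nat.choose_eq_zero_of_lt hlt]
  · have h := factorial_mul_sum_prod_factorial hle
    obtain ⟨m, hm⟩ := Nat.exists_eq_add_one_of_ne_zero (Fintype.card_ne_zero (α := α))
    rw [hm] at hle h ⊢
    rw [Nat.add_sub_cancel, Nat.add_sub_add_right,
      Nat.choose_symm (Nat.le_of_succ_le_succ hle)] at h
    refine Nat.eq_of_mul_eq_mul_left d.succ_pos ?_
    calc (d + 1) * (d ! * _) = (m + 1)! * m.choose d := by
          rw [← h, ← mul_assoc, Nat.factorial_succ]
      _ = m ! * ((m + 1) * m.choose d) := by rw [Nat.factorial_succ]; ring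
      _ = (d + 1) * (m ! * (m + 1).choose (d + 1)) := by rw [Nat.add_one_mul_choose_eq]; ring

end FactorialWeights

theorem mobius_identity_fixed_blocks_general {α R : Type*} [Fintype α] [DecidableEq α]
    [Nonempty α] [CommRing R] {d : ℕ} (hd : 1 ≤ d)
    {μ : Finpartition (univ : Finset α) → Finpartition (univ : Finset α) → R}
    (hμ₁ : ∀ x, μ x x = 1) (hμ₂ : ∀ x y, x < y → ∑ z with x ≤ z ∧ z ≤ y, μ x z = 0) :
    ∑ π : Finpartition (univ : Finset α) with #π.parts = d,
        (∏ B ∈ π.parts, ((#B)! : R)) * μ π ⊤ =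
      ((Fintype.card α - 1)! : R) * (-1) ^ (d - 1) * ((Fintype.card α).choose d : R) := by
  obtain ⟨e, rfl⟩ := Nat.exists_eq_add_of_le' hd
  calc _ = ∑ π : Finpartition (univ : Finset α) with #π.parts = e + 1,
        (∏ B ∈ π.parts, ((#B)! : R)) * ((-1) ^ e * (e ! : R)) :=
        sum_congr rfl fun π hπ => by
          rw [mobius_top_eq hμ₁ hμ₂, (mem_filter.1 hπ).2, Nat.add_sub_cancel]
    _ = (-1) ^ e * ((e ! * ∑ π : Finpartition (univ : Finset α) with #π.parts = e + 1,
        ∏ B ∈ π.parts, (#B)! : ℕ) : R) := by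
        rw [← sum_mul]
        push_cast
        ring
    _ = _ := by
        rw [factorial_mul_sum_prod_factorial_succ, Nat.add_sub_cancel]
        push_cast
        ring

/-- **Möbius-function identity for partitions with a fixed number of blocks.**  In the
lattice `Π_k` of set partitions of `{1,…,k}` ordered by refinement, if `μ` satisfies the
defining recursion of the Möbius function (`μ(x,x) = 1` and `Σ_{x ≤ z ≤ y} μ(x,z) = 0`
for `x < y`), then `Σ_π (∏_{B block of π} |B|!)·μ(π,1̂) = (k−1)!·(−1)^{d−1}·C(k,d)`,
the sum being over partitions `π` having exactly `d` blocks, for `1 ≤ d ≤ k`. -/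
theorem mobius_identity_fixed_blocks (k d : ℕ) (hd : 1 ≤ d) (hdk : d ≤ k)
    (μ : Finpartition (Finset.univ : Finset (Fin k)) →
         Finpartition (Finset.univ : Finset (Fin k)) → ℤ)
    (hμ₁ : ∀ x, μ x x = 1)
    (hμ₂ : ∀ x y, x < y → ∑ z ∈ Finset.univ.filter (fun z => x ≤ z ∧ z ≤ y), μ x z = 0) :
    ∑ π ∈ Finset.univ.filter
        (fun π : Finpartition (Finset.univ : Finset (Fin k)) => π.parts.card = d),
      (∏ B ∈ π.parts, (B.card.factorial : ℤ)) * μ π ⊤ =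
      ((k - 1).factorial : ℤ) * (-1 : ℤ) ^ (d - 1) * (k.choose d : ℤ) := by
  have : Nonempty (Fin k) := Fin.pos_iff_nonempty.1 (hd.trans hdk)
  simpa using mobius_identity_fixed_blocks_general hd hμ₁ hμ₂
end

section
/- Let p be a prime, q = p^a a prime power, F_q the finite field with q elements, b ∈ F_q, and k a non-negative integer. If k ≢ 0 (mod p) and k ≢ 1 (mod p), then q·P_k(b) = binom(q+k−2, k). -/
/-!
Translating a multiset of size `k` by `c` adds `k • c` to its sum. In a finite abelian group of
order `q` coprime to `k`, every element has the form `k • c`, so the multisets of size `k` are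
equidistributed over the `q` possible sums. A multiset of size `k + 1` containing `0` is one of
size `k` with the same sum and a `0` added. When `q` is coprime to both `k` and `k + 1`, removing
these from the multisets of size `k + 1` thus leaves an equidistributed family: the multisets of
size `k + 1` of the `q - 1` nonzero elements.
-/

open scoped Finset

section AddCommMonoid

variable {M : Type*} [AddCommMonoid M] [Fintype M] [DecidableEq M]

lemma card_filter_zero_mem_sym_succ_sum_eq (k : ℕ) (b : M) :
    #{m : Sym M (k + 1) | (0 : M) ∈ (m : Multiset M) ∧ (m : Multiset M).sum = b} =
      #{m : Sym M k | (m : Multiset M).sum = b} := by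
  symm
  refine Finset.card_bij (fun m _ => (0 : M) ::ₛ m) (fun m hm => ?_)
    (fun m _ m' _ => (Sym.cons_inj_right 0 m m').1) (fun m hm => ?_)
  · simpa [Sym.coe_cons] using hm
  · rw [Finset.mem_filter_univ] at hm
    obtain ⟨m', rfl⟩ := Sym.exists_cons_of_mem (Sym.mem_coe.1 hm.1)
    exact ⟨m', by simpa [Sym.coe_cons] using hm.2, rfl⟩

lemma card_filter_zero_notMem_sym_succ_add_card_filter_sym (k : ℕ) (b : M) :
    #{m : Sym M (k + 1) | (0 : M) ∉ (m : Multiset M) ∧ (m : Multiset M).sum = b} +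
        #{m : Sym M k | (m : Multiset M).sum = b} =
      #{m : Sym M (k + 1) | (m : Multiset M).sum = b} := by
  rw [← card_filter_zero_mem_sym_succ_sum_eq, add_comm,
    ← Finset.card_filter_add_card_filter_not (s := {m : Sym M (k + 1) | (m : Multiset M).sum = b})
      (fun m => (0 : M) ∈ (m : Multiset M)),
    Finset.filter_filter, Finset.filter_filter]
  simp only [and_comm]

end AddCommMonoid

section AddCommGroup

variable {G : Type*} [AddCommGroup G] [Fintype G] [DecidableEq G]

lemma card_filter_sym_sum_eq_add_nsmul (k : ℕ) (b c : G) :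
    #{m : Sym G k | (m : Multiset G).sum = b + k • c} =
      #{m : Sym G k | (m : Multiset G).sum = b} := by
  refine (Finset.card_equiv (Sym.equivCongr (Equiv.addRight c)) fun m => ?_).symm
  simp [Sym.equivCongr, Multiset.sum_map_add]

lemma card_mul_card_filter_sym_sum_eq {k : ℕ} (hk : (Fintype.card G).Coprime k) (b : G) :
    Fintype.card G * #{m : Sym G k | (m : Multiset G).sum = b} =
      (Fintype.card G).multichoose k := by
  have equidistributed (b' : G) :
      #{m : Sym G k | (m : Multiset G).sum = b'} = #{m : Sym G k | (m : Multiset G).sum = b} := by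
    rw [← Nat.card_eq_fintype_card] at hk
    obtain ⟨c, hc : k • c = b' - b⟩ := hk.nsmul_right_bijective.surjective (b' - b)
    rw [← card_filter_sym_sum_eq_add_nsmul k b c, hc, add_sub_cancel]
  calc Fintype.card G * #{m : Sym G k | (m : Multiset G).sum = b}
      = ∑ b' : G, #{m : Sym G k | (m : Multiset G).sum = b'} := by simp [equidistributed]
    _ = Fintype.card (Sym G k) :=
        (Finset.card_eq_sum_card_fiberwise fun _ _ => Finset.mem_univ _).symm
    _ = (Fintype.card G).multichoose k := Sym.card_sym_eq_multichoose G k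

theorem partitions_finite_field_generic_general {k : ℕ}
    (hk : (Fintype.card G).Coprime k) (hk_succ : (Fintype.card G).Coprime (k + 1)) (b : G) :
    Fintype.card G *
        #{m : Sym G (k + 1) | (0 : G) ∉ (m : Multiset G) ∧ (m : Multiset G).sum = b} =
      (Fintype.card G - 1).multichoose (k + 1) := by
  have pascal : (Fintype.card G).multichoose (k + 1) =
      (Fintype.card G - 1).multichoose (k + 1) + (Fintype.card G).multichoose k := by
    obtain ⟨n, hn⟩ := Nat.exists_eq_add_one.2 (Fintype.card_pos (α := G))
    rw [hn, Nat.multichoose_succ_succ, Nat.add_sub_cancel, add_comm]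
  apply Nat.add_right_cancel (m := (Fintype.card G).multichoose k)
  rw [← pascal, ← card_mul_card_filter_sym_sum_eq hk b, ← mul_add,
    card_filter_zero_notMem_sym_succ_add_card_filter_sym, card_mul_card_filter_sym_sum_eq hk_succ]

end AddCommGroup

/-- **Partitions over finite fields, generic case.**  For `q = p^a` and `b ∈ F_q`,
if `k ≢ 0 (mod p)` and `k ≢ 1 (mod p)`, then `q·P_k(b) = C(q+k−2, k)`, where `P_k(b)` is
the number of multisets of `k` nonzero elements of `F_q` with sum `b`. -/
theorem partitions_finite_field_generic (p a : ℕ) (hp : p.Prime) (ha : 0 < a)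
    (F : Type*) [Field F] [Fintype F] [DecidableEq F] (hF : Fintype.card F = p ^ a)
    (b : F) (k : ℕ) (h0 : ¬ k ≡ 0 [MOD p]) (h1 : ¬ k ≡ 1 [MOD p]) :
    p ^ a * (Finset.univ.filter fun m : Sym F k =>
        (0 : F) ∉ (m : Multiset F) ∧ (m : Multiset F).sum = b).card =
      (p ^ a + k - 2).choose k := by
  obtain _ | j := k
  · exact absurd rfl h0
  have coprime_card {n : ℕ} (hn : ¬ n ≡ 0 [MOD p]) : (Fintype.card F).Coprime n := by
    rw [hF]
    exact ((hp.coprime_iff_not_dvd).2 (mt Nat.modEq_zero_iff_dvd.2 hn)).pow_left a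
  have hj : ¬ j ≡ 0 [MOD p] := fun h => h1 (h.add_right 1)
  rw [← hF, partitions_finite_field_generic_general (coprime_card hj) (coprime_card h0),
    Nat.multichoose_eq]
  have card_pos : 0 < Fintype.card F := Fintype.card_pos
  congr 1
  omega
end

section
/- Let p be a prime, q = p^a a prime power, F_q the finite field with q elements, b ∈ F_q, and k a positive integer with p ∣ k. Then q·P_k(b) = binom(q+k−2, k) + v(b)·binom(q/p + k/p − 1, k/p). -/
/-!
By Fourier inversion, the number of multisets with sum `b` is determined by the character sums
`∑ ψ(sum of m)` over the multisets `m` of `k` nonzero elements. The generating function of these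
sums in `k` is `∏_{x ≠ 0} (1 - ψ(x) X)⁻¹`. On a group of exponent `p` a nontrivial `ψ` takes every
`p`-th root of unity as a value equally often, so this is `(1 - X) (1 - X ^ p) ^ (-q / p)`, whose
coefficients at the multiples of `p` do not depend on `ψ`.
-/

open Finset PowerSeries

section Sym

variable {α : Type*} [DecidableEq α]

theorem sum_sym_eq_sum_finsuppAntidiag {M : Type*} [AddCommMonoid M] (s : Finset α) (k : ℕ)
    (f : Multiset α → M) :
    ∑ m ∈ s.sym k, f m = ∑ l ∈ s.finsuppAntidiag k, f (Finsupp.toMultiset l) := by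
  symm
  refine sum_bij' (fun l hl => Sym.mk (Finsupp.toMultiset l) ?_)
    (fun m _ => Multiset.toFinsupp (m : Multiset α)) ?_ ?_ ?_ ?_ ?_
  · rw [Finsupp.card_toMultiset]
    exact (mem_finsuppAntidiag'.1 hl).1
  · intro l hl
    exact mem_sym_iff.2 fun a ha =>
      (mem_finsuppAntidiag.1 hl).2 ((Finsupp.mem_toMultiset l a).1 ha)
  · intro m hm
    rw [mem_finsuppAntidiag', Multiset.toFinsupp_support]
    exact ⟨(Multiset.toFinsupp_sum_eq _).trans m.2,
      fun a ha => mem_sym_iff.1 hm a (Multiset.mem_toFinset.1 ha)⟩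
  · intro l _
    exact Finsupp.toMultiset_toFinsupp l
  · intro m _
    exact Subtype.ext (Multiset.toFinsupp_toMultiset (m : Multiset α))
  · intro l _
    rfl

theorem card_finset_sym_eq_multichoose (s : Finset α) (k : ℕ) :
    #(s.sym k) = (#s).multichoose k := by
  rw [← card_finsuppAntidiag_nat_eq_multichoose, card_eq_sum_ones, card_eq_sum_ones,
    sum_sym_eq_sum_finsuppAntidiag s k fun _ => 1]

theorem coeff_prod_mk_pow {R : Type*} [CommSemiring R] (s : Finset α) (g : α → R) (k : ℕ) :
    coeff k (∏ x ∈ s, (mk fun n => g x ^ n : R⟦X⟧)) =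
      ∑ m ∈ s.sym k, ((m : Multiset α).map g).prod := by
  rw [coeff_prod, sum_sym_eq_sum_finsuppAntidiag s k fun m => (m.map g).prod]
  refine sum_congr rfl fun l hl => ?_
  simp only [coeff_mk, prod_multiset_map_count, Finsupp.toFinset_toMultiset,
    Finsupp.count_toMultiset]
  refine (prod_subset (mem_finsuppAntidiag.1 hl).2 fun x _ hx => ?_).symm
  rw [Finsupp.notMem_support_iff.1 hx, pow_zero]

end Sym

section PowerSeries

variable {R : Type*} [CommRing R]

theorem mk_pow_mul_one_sub_C_mul_X (r : R) : (mk fun n => r ^ n : R⟦X⟧) * (1 - C r * X) = 1 := by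
  simpa [rescale_mk, rescale_X, Pi.mul_def] using
    congrArg (rescale r) (mk_one_mul_one_sub_eq_one R)

theorem mk_sum_sym_mul_prod_one_sub {α : Type*} [DecidableEq α] (s : Finset α) (g : α → R) :
    (mk fun k => ∑ m ∈ s.sym k, ((m : Multiset α).map g).prod) *
      ∏ x ∈ s, (1 - C (g x) * X) = 1 := by
  have hmk : (mk fun k => ∑ m ∈ s.sym k, ((m : Multiset α).map g).prod) =
      ∏ x ∈ s, (mk fun n => g x ^ n : R⟦X⟧) := by
    ext k
    rw [coeff_mk, coeff_prod_mk_pow]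
  rw [hmk, ← prod_mul_distrib]
  exact prod_eq_one fun x _ => mk_pow_mul_one_sub_C_mul_X (g x)

variable (R) in
theorem mk_multichoose_mul_one_sub_X_pow (d : ℕ) :
    (mk fun n => (d.multichoose n : R)) * (1 - X) ^ d = 1 := by
  have h := mk_sum_sym_mul_prod_one_sub (univ : Finset (Fin d)) (fun _ => (1 : R))
  simpa only [Multiset.map_const', Multiset.prod_replicate, one_pow, sum_const, nsmul_one,
    card_finset_sym_eq_multichoose, prod_const, card_univ, Fintype.card_fin, map_one,
    one_mul] using h

theorem coeff_mul_one_sub_X_mul_expand {n : ℕ} (hn : 1 < n) (f : R⟦X⟧) (j : ℕ) :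
    coeff (n * j) ((1 - X) * expand n (Nat.ne_zero_of_lt hn) f) = coeff j f := by
  rw [sub_mul, one_mul, map_sub, coeff_expand_mul, sub_eq_self]
  obtain _ | j := j
  · rw [mul_zero, coeff_zero_X_mul]
  · have hsucc : n * (j + 1) = n * j + (n - 1) + 1 := by rw [mul_add]; omega
    have hndvd : ¬ n ∣ n * j + (n - 1) := fun h => Nat.not_dvd_of_pos_of_lt (by omega)
      (by omega) ((Nat.dvd_add_right (dvd_mul_right n j)).1 h)
    rw [hsucc, coeff_succ_X_mul, coeff_expand_of_not_dvd _ _ _ hndvd]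

end PowerSeries

section AddChar

theorem addChar_apply_multiset_sum {A M : Type*} [AddCommMonoid A] [CommMonoid M]
    (ψ : AddChar A M) (m : Multiset A) : ψ m.sum = (m.map ψ).prod := by
  induction m using Multiset.induction with
  | empty => simp
  | cons x m ih => simp [AddChar.map_add_eq_mul, ih]

theorem addChar_apply_pow_eq_one {A M : Type*} [AddMonoid A] [Monoid M] {n : ℕ} {x : A}
    (hx : n • x = 0) (ψ : AddChar A M) : ψ x ^ n = 1 := by
  rw [← AddChar.map_nsmul_eq_pow, hx, AddChar.map_zero_eq_one]

theorem exists_isPrimitiveRoot_addChar_apply {A R : Type*} [AddMonoid A] [CommRing R]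
    [IsDomain R] {p : ℕ} (hp : p.Prime) (hA : ∀ x : A, p • x = 0) {ψ : AddChar A R}
    (hψ : ψ ≠ 1) : ∃ x, IsPrimitiveRoot (ψ x) p := by
  obtain ⟨x, hx⟩ := AddChar.ne_one_iff.1 hψ
  have hmem := (Polynomial.mem_nthRootsFinset hp.pos 1).2 (addChar_apply_pow_eq_one (hA x) ψ)
  exact ⟨x, isPrimitiveRoot_of_mem_nthRootsFinset hp hmem hx⟩

theorem card_addChar_fiber_eq_of_mem_range {G M : Type*} [AddGroup G] [Fintype G] [Monoid M]
    [DecidableEq M] {ψ : AddChar G M} {z w : M} (hz : z ∈ Set.range ψ) (hw : w ∈ Set.range ψ) :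
    #{x | ψ x = z} = #{x | ψ x = w} := by
  obtain ⟨x, rfl⟩ := hz
  obtain ⟨y, rfl⟩ := hw
  refine card_equiv (Equiv.addRight (-x + y)) fun g => ?_
  have hy : ψ y = ψ x * ψ (-x + y) := by rw [← AddChar.map_add_eq_mul, add_neg_cancel_left]
  rw [mem_filter_univ, mem_filter_univ, Equiv.coe_addRight, AddChar.map_add_eq_mul, hy,
    (ψ.val_isUnit _).mul_left_inj]

variable {G R : Type*} [AddGroup G] [Fintype G] [CommRing R] [IsDomain R] {n : ℕ} [NeZero n]
  {ψ : AddChar G R} {x₀ : G}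

theorem mapsTo_addChar_nthRootsFinset (hG : ∀ x : G, n • x = 0) (ψ : AddChar G R) :
    ∀ x ∈ (univ : Finset G), ψ x ∈ Polynomial.nthRootsFinset n (1 : R) := fun x _ =>
  (Polynomial.mem_nthRootsFinset (NeZero.pos n) 1).2 (addChar_apply_pow_eq_one (hG x) ψ)

theorem card_addChar_fiber [DecidableEq R] (hG : ∀ x : G, n • x = 0)
    (hx₀ : IsPrimitiveRoot (ψ x₀) n) {z : R} (hz : z ∈ Polynomial.nthRootsFinset n (1 : R)) :
    #{x | ψ x = z} = Fintype.card G / n := by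
  have hrange : ∀ w ∈ Polynomial.nthRootsFinset n (1 : R), w ∈ Set.range ψ := by
    intro w hw
    obtain ⟨i, -, rfl⟩ :=
      hx₀.eq_pow_of_pow_eq_one ((Polynomial.mem_nthRootsFinset (NeZero.pos n) 1).1 hw)
    exact ⟨i • x₀, ψ.map_nsmul_eq_pow i x₀⟩
  have hfiber : ∀ w ∈ Polynomial.nthRootsFinset n (1 : R), #{x | ψ x = w} = #{x | ψ x = z} :=
    fun w hw => card_addChar_fiber_eq_of_mem_range (hrange w hw) (hrange z hz)
  have hcard : Fintype.card G = n * #{x | ψ x = z} := by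
    rw [← card_univ, card_eq_sum_card_fiberwise (mapsTo_addChar_nthRootsFinset hG ψ),
      sum_congr rfl hfiber, sum_const, hx₀.card_nthRootsFinset, smul_eq_mul]
  rw [hcard, Nat.mul_div_cancel_left _ (NeZero.pos n)]

theorem prod_comp_addChar {M : Type*} [CommMonoid M] (hG : ∀ x : G, n • x = 0)
    (hx₀ : IsPrimitiveRoot (ψ x₀) n) (f : R → M) :
    ∏ x, f (ψ x) = (∏ z ∈ Polynomial.nthRootsFinset n (1 : R), f z) ^ (Fintype.card G / n) := by
  classical
  rw [← prod_fiberwise_of_maps_to' (mapsTo_addChar_nthRootsFinset hG ψ), ← prod_pow]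
  refine prod_congr rfl fun z hz => ?_
  rw [prod_const, card_addChar_fiber hG hx₀ hz]

theorem prod_one_sub_addChar_mul (hG : ∀ x : G, n • x = 0)
    (hx₀ : IsPrimitiveRoot (ψ x₀) n) (y : R) :
    ∏ x, (1 - ψ x * y) = (1 - y ^ n) ^ (Fintype.card G / n) := by
  rw [prod_comp_addChar hG hx₀ fun z => 1 - z * y,
    ← hx₀.pow_sub_pow_eq_prod_sub_mul 1 y (NeZero.pos n), one_pow]

theorem prod_one_sub_C_addChar_mul_X (hG : ∀ x : G, n • x = 0)
    (hx₀ : IsPrimitiveRoot (ψ x₀) n) :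
    ∏ x, (1 - C (ψ x) * X : R⟦X⟧) = (1 - X ^ n) ^ (Fintype.card G / n) :=
  prod_one_sub_addChar_mul (ψ := (C : R →+* R⟦X⟧).toMonoidHom.compAddChar ψ) hG
    (hx₀.map_of_injective C_injective) X

end AddChar

section NonzeroMultisets

variable {G R : Type*} [AddCommGroup G] [Fintype G] [DecidableEq G] [CommRing R] [IsDomain R]
  {ψ : AddChar G R}

theorem mk_sum_addChar_sym_compl_zero {n : ℕ} [NeZero n] (hG : ∀ x : G, n • x = 0) {x₀ : G}
    (hx₀ : IsPrimitiveRoot (ψ x₀) n) :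
    (mk fun k => ∑ m ∈ ({0}ᶜ : Finset G).sym k, ψ (m : Multiset G).sum) =
      (1 - X) * expand n (NeZero.ne n)
        (mk fun i => ((Fintype.card G / n).multichoose i : R)) := by
  simp only [addChar_apply_multiset_sum]
  refine left_inv_eq_right_inv (mk_sum_sym_mul_prod_one_sub _ ψ) ?_
  have hprod : (∏ x ∈ ({0}ᶜ : Finset G), (1 - C (ψ x) * X)) * (1 - X) =
      (1 - X ^ n) ^ (Fintype.card G / n) := by
    rw [← prod_one_sub_C_addChar_mul_X hG hx₀, ← prod_compl_mul_prod {0}, prod_singleton,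
      AddChar.map_zero_eq_one, map_one, one_mul]
  have hexpand := congrArg (expand n (NeZero.ne n))
    (mk_multichoose_mul_one_sub_X_pow R (Fintype.card G / n))
  rw [map_mul, map_pow, map_sub, map_one, expand_X] at hexpand
  rw [← mul_assoc, hprod, mul_comm, hexpand]

theorem sum_addChar_sym_compl_zero {p : ℕ} (hp : p.Prime) (hG : ∀ x : G, p • x = 0)
    (hψ : ψ ≠ 1) {k : ℕ} (hpk : p ∣ k) :
    ∑ m ∈ ({0}ᶜ : Finset G).sym k, ψ (m : Multiset G).sum =
      (Fintype.card G / p).multichoose (k / p) := by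
  obtain ⟨x₀, hx₀⟩ := exists_isPrimitiveRoot_addChar_apply hp hG hψ
  have : NeZero p := ⟨hp.ne_zero⟩
  obtain ⟨j, rfl⟩ := hpk
  rw [Nat.mul_div_cancel_left j hp.pos]
  have hcoeff := congrArg (coeff (p * j)) (mk_sum_addChar_sym_compl_zero hG hx₀)
  rwa [coeff_mul_one_sub_X_mul_expand hp.one_lt, coeff_mk, coeff_mk] at hcoeff

end NonzeroMultisets

section Fourier

variable {G ι : Type*} [AddCommGroup G] [Fintype G] [DecidableEq G]

theorem card_mul_card_fiber_eq_sum_addChar (s : Finset ι) (f : ι → G) (b : G) :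
    (Fintype.card G : ℂ) * #{i ∈ s | f i = b} =
      ∑ ψ : AddChar G ℂ, ψ (-b) * ∑ i ∈ s, ψ (f i) := by
  simp only [mul_sum, ← AddChar.map_add_eq_mul]
  rw [sum_comm]
  simp only [AddChar.sum_apply_eq_ite, neg_add_eq_zero, eq_comm (a := b)]
  rw [← sum_filter, sum_const, nsmul_eq_mul, mul_comm]

theorem card_mul_card_fiber_of_sum_addChar_eq {s : Finset ι} {f : ι → G} {c : ℤ}
    (hc : ∀ ψ : AddChar G ℂ, ψ ≠ 1 → ∑ i ∈ s, ψ (f i) = c) (b : G) :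
    (Fintype.card G : ℤ) * #{i ∈ s | f i = b} =
      #s + (if b = 0 then (Fintype.card G : ℤ) - 1 else -1) * c := by
  have hfourier := card_mul_card_fiber_eq_sum_addChar s f b
  have hnontrivial : ∑ ψ ∈ univ.erase (1 : AddChar G ℂ), ψ (-b) * ∑ i ∈ s, ψ (f i) =
      (if b = 0 then (Fintype.card G : ℂ) - 1 else -1) * c := by
    rw [sum_congr rfl fun ψ hψ => by rw [hc ψ (ne_of_mem_erase hψ)], ← sum_mul,
      sum_erase_eq_sub (mem_univ _), AddChar.sum_apply_eq_ite, AddChar.one_apply]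
    simp only [neg_eq_zero]
    split_ifs <;> ring
  rw [← add_sum_erase _ _ (mem_univ (1 : AddChar G ℂ)), hnontrivial] at hfourier
  simp only [AddChar.one_apply, sum_const, nsmul_one, one_mul] at hfourier
  exact_mod_cast hfourier

end Fourier

theorem partitions_finite_field_zero_mod_p_general {G : Type*} [AddCommGroup G] [Fintype G]
    [DecidableEq G] {p : ℕ} (hp : p.Prime) (hG : ∀ x : G, p • x = 0) (b : G) {k : ℕ}
    (hpk : p ∣ k) :
    (Fintype.card G : ℤ) * #{m : Sym G k | (0 : G) ∉ (m : Multiset G) ∧ (m : Multiset G).sum = b} =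
      ((Fintype.card G + k - 2).choose k : ℤ) +
        (if b = 0 then (Fintype.card G : ℤ) - 1 else -1) *
          ((Fintype.card G / p + k / p - 1).choose (k / p) : ℤ) := by
  have hsym : ({m : Sym G k | (0 : G) ∉ (m : Multiset G)} : Finset (Sym G k)) =
      ({0}ᶜ : Finset G).sym k := by
    ext m
    simp only [mem_filter_univ, Sym.mem_coe, mem_sym_iff, mem_compl, mem_singleton]
    exact ⟨fun h x hx hx0 => h (hx0 ▸ hx), fun h h0 => h 0 h0 rfl⟩
  have hcard : #(({0}ᶜ : Finset G).sym k) = (Fintype.card G + k - 2).choose k := by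
    have hpos : 0 < Fintype.card G := Fintype.card_pos
    rw [card_finset_sym_eq_multichoose, card_compl, card_singleton, Nat.multichoose_eq]
    congr 1
    omega
  rw [← filter_filter, hsym, ← hcard, ← Nat.multichoose_eq]
  exact card_mul_card_fiber_of_sum_addChar_eq
    (fun ψ hψ => mod_cast sum_addChar_sym_compl_zero hp hG hψ hpk) b

/-- **Partitions over finite fields, case `k ≡ 0 (mod p)`.**  For `q = p^a`, `b ∈ F_q`
and `p ∣ k`, `q·P_k(b) = C(q+k−2, k) + v(b)·C(q/p + k/p − 1, k/p)`, where `P_k(b)` is the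
number of multisets of `k` nonzero elements of `F_q` with sum `b`, and `v(b) = q−1` if
`b = 0`, `v(b) = −1` otherwise. -/
theorem partitions_finite_field_zero_mod_p (p a : ℕ) (hp : p.Prime) (ha : 0 < a)
    (F : Type*) [Field F] [Fintype F] [DecidableEq F] (hF : Fintype.card F = p ^ a)
    (b : F) (k : ℕ) (hk : 0 < k) (hpk : p ∣ k) :
    (p ^ a : ℤ) * ((Finset.univ.filter fun m : Sym F k =>
        (0 : F) ∉ (m : Multiset F) ∧ (m : Multiset F).sum = b).card : ℤ) =
      ((p ^ a + k - 2).choose k : ℤ) +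
        (if b = 0 then (p ^ a : ℤ) - 1 else -1) *
          ((p ^ a / p + k / p - 1).choose (k / p) : ℤ) := by
  have : Fact p.Prime := ⟨hp⟩
  have : CharP F p := charP_of_card_eq_prime_pow hF
  have hG (x : F) : p • x = 0 := by rw [nsmul_eq_mul, CharP.cast_eq_zero, zero_mul]
  simpa [hF] using partitions_finite_field_zero_mod_p_general hp hG b hpk
end
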